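/- Assume 0 < y < 1. Then the random variables log det(ρ_n) + (n − p(n))·log(1 − p(n)/n) + p(n) converge in distribution, as n → ∞, to a Gaussian law N(μ_log, σ_log²) with mean μ_log = (3/2)·log(1−y) + 2y and variance σ_log² = −2·log(1−y) − 2y. -/

import Mathlib

open MeasureTheory Finset

/-- The (finite) sample space of `p`-tuples of permutations of `{1,…,n}` carries the
discrete σ-algebra. -/
instance permVecMeasurableSpace (n p : ℕ) :
    MeasurableSpace (Fin p → Equiv.Perm (Fin n)) := ⊤

/-- The uniform probability measure on `p`-tuples of permutations of `{1,…,n}`: the joint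
law of `p` independent uniform random permutations `σ₁,…,σ_p`, i.e. the law of the
columnwise ranks of an `n×p` data matrix with independent entries having continuous
distributions. -/
noncomputable def permVecUniform (n p : ℕ) : Measure (Fin p → Equiv.Perm (Fin n)) :=
  (PMF.uniformOfFintype (Fin p → Equiv.Perm (Fin n))).toMeasure

/-- Spearman's rank correlation matrix
`ρₙ = (12/(n(n²−1))) Σ_{k=1}^n (r_k − (n+1)/2·1_p)(r_k − (n+1)/2·1_p)ᵀ ∈ ℝ^{p×p}`, built
from the rank matrix `r_{kj} = σⱼ(k)`; the rank `σⱼ(k) ∈ {1,…,n}` is realized as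
`(ω j k) + 1` with `ω j k : Fin n`. -/
noncomputable def spearmanRho (n p : ℕ) (ω : Fin p → Equiv.Perm (Fin n)) :
    Matrix (Fin p) (Fin p) ℝ :=
  (12 / ((n : ℝ) * ((n : ℝ) ^ 2 - 1))) •
    ∑ k : Fin n, Matrix.vecMulVec
      (fun j => ((ω j k : ℕ) : ℝ) + 1 - ((n : ℝ) + 1) / 2)
      (fun j => ((ω j k : ℕ) : ℝ) + 1 - ((n : ℝ) + 1) / 2)

section Helpers


/-- Uniform average over a finite type. -/
noncomputable def favg {α E : Type*} [Fintype α] [AddCommGroup E] [Module ℝ E] (f : α → E) : E :=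
  (Fintype.card α : ℝ)⁻¹ • ∑ a, f a

section favg
variable {α β E : Type*} [Fintype α] [Fintype β]

theorem favg_add [AddCommGroup E] [Module ℝ E] (f g : α → E) :
    favg (fun a => f a + g a) = favg f + favg g := by
  simp [favg, Finset.sum_add_distrib, smul_add]

theorem favg_sub [AddCommGroup E] [Module ℝ E] (f g : α → E) :
    favg (fun a => f a - g a) = favg f - favg g := by
  simp [favg, Finset.sum_sub_distrib, smul_sub]

theorem favg_sum [AddCommGroup E] [Module ℝ E] {ι : Type*} (s : Finset ι) (f : ι → α → E) :
    favg (fun a => ∑ i ∈ s, f i a) = ∑ i ∈ s, favg (f i) := by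
  simp only [favg]
  rw [Finset.sum_comm, Finset.smul_sum]

theorem favg_const [Nonempty α] [AddCommGroup E] [Module ℝ E] (c : E) :
    favg (fun _ : α => c) = c := by
  have : (Fintype.card α : ℝ) ≠ 0 := by exact_mod_cast Fintype.card_ne_zero
  simp only [favg, Finset.sum_const, Finset.card_univ, ← Nat.cast_smul_eq_nsmul ℝ, smul_smul]
  rw [inv_mul_cancel₀ this, one_smul]

theorem favg_mul_left (c : ℝ) (f : α → ℝ) : favg (fun a => c * f a) = c * favg f := by
  simp [favg, ← Finset.mul_sum, mul_left_comm]

theorem favg_mul_right (c : ℝ) (f : α → ℝ) : favg (fun a => f a * c) = favg f * c := by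
  simp [favg, ← Finset.sum_mul, mul_assoc]

theorem favg_cmul_left (c : ℂ) (f : α → ℂ) : favg (fun a => c * f a) = c * favg f := by
  simp [favg, ← Finset.mul_sum, mul_left_comm]

theorem favg_ofReal (f : α → ℝ) : favg (fun a => (f a : ℂ)) = ((favg f : ℝ) : ℂ) := by
  simp [favg]

theorem favg_mono (f g : α → ℝ) (h : ∀ a, f a ≤ g a) : favg f ≤ favg g := by
  simp only [favg, smul_eq_mul]
  exact mul_le_mul_of_nonneg_left (Finset.sum_le_sum fun a _ => h a) (by positivity)

theorem favg_nonneg (f : α → ℝ) (h : ∀ a, 0 ≤ f a) : 0 ≤ favg f := by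
  simp only [favg, smul_eq_mul]
  exact mul_nonneg (by positivity) (Finset.sum_nonneg fun a _ => h a)

theorem norm_favg_le (f : α → ℂ) : ‖favg f‖ ≤ favg (fun a => ‖f a‖) := by
  simp only [favg, norm_smul, norm_inv, Real.norm_natCast, smul_eq_mul]
  exact mul_le_mul_of_nonneg_left (norm_sum_le _ _) (by positivity)

theorem abs_favg_le (f : α → ℝ) : |favg f| ≤ favg (fun a => |f a|) := by
  simp only [favg, smul_eq_mul, abs_mul, abs_inv, Nat.abs_cast]
  exact mul_le_mul_of_nonneg_left (Finset.abs_sum_le_sum_abs _ _) (by positivity)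

theorem favg_equiv [AddCommGroup E] [Module ℝ E] (e : α ≃ β) (f : β → E) :
    favg (fun a => f (e a)) = favg f := by
  simp only [favg, Fintype.card_congr e]
  rw [Equiv.sum_comp e f]

theorem favg_prod [AddCommGroup E] [Module ℝ E] (f : α × β → E) :
    favg f = favg (fun a => favg (fun b => f (a, b))) := by
  simp only [favg, Fintype.card_prod, Fintype.sum_prod_type, Finset.smul_sum, smul_smul]
  congr 1; ext a; congr 1; ext b
  push_cast
  rw [mul_inv]

theorem favg_sq_le (f : α → ℝ) : (favg f) ^ 2 ≤ favg (fun a => f a ^ 2) := by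
  rcases isEmpty_or_nonempty α with h | h
  · simp [favg]
  have h0 := favg_nonneg (fun a => (f a - favg f) ^ 2) (fun a => sq_nonneg _)
  have : favg (fun a => (f a - favg f) ^ 2) = favg (fun a => f a ^ 2) - (favg f) ^ 2 := by
    have : (fun a => (f a - favg f) ^ 2) = fun a => (f a ^ 2 - 2 * favg f * f a) + favg f ^ 2 := by
      ext a; ring
    rw [this, favg_add, favg_sub, favg_mul_left, favg_const]; ring
  linarith

theorem favg_var [Nonempty α] (f : α → ℝ) (μ : ℝ) (hμ : favg f = μ) :
    favg (fun a => (f a - μ) ^ 2) = favg (fun a => f a ^ 2) - μ ^ 2 := by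
  have : (fun a => (f a - μ) ^ 2) = fun a => (f a ^ 2 - 2 * μ * f a) + μ ^ 2 := by
    ext a; ring
  rw [this, favg_add, favg_sub, favg_mul_left, favg_const, hμ]; ring

end favg

open Equiv in
/-- Dirichlet form coefficient. -/
noncomputable def dform {n : ℕ} (g : Perm (Fin n) → ℝ) (k l : Fin n) : ℝ :=
  favg (fun σ : Perm (Fin n) => (g (σ * swap k l) - g σ) ^ 2)

theorem dform_nonneg {n : ℕ} (g : Equiv.Perm (Fin n) → ℝ) (k l : Fin n) : 0 ≤ dform g k l :=
  favg_nonneg _ fun _ => sq_nonneg _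

theorem dform_self {n : ℕ} (g : Equiv.Perm (Fin n) → ℝ) (k : Fin n) : dform g k k = 0 := by
  have h : ∀ σ : Equiv.Perm (Fin n), σ * Equiv.swap k k = σ := fun σ => by
    rw [Equiv.swap_self]; rfl
  simp only [dform, favg, h, sub_self]; simp

open Equiv

theorem var_pairs {N : ℕ} (hN : 0 < N) (h : Fin N → ℝ) :
    favg (fun i => h i ^ 2) - (favg h) ^ 2 =
      (1 / (2 * (N : ℝ) ^ 2)) * ∑ i, ∑ j, (h i - h j) ^ 2 := by
  have hN' : (N : ℝ) ≠ 0 := by positivity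
  have : ∑ i, ∑ j, (h i - h j) ^ 2 = 2 * N * ∑ i, h i ^ 2 - 2 * (∑ i, h i) ^ 2 := by
    have : ∀ i j, (h i - h j) ^ 2 = h i ^ 2 + h j ^ 2 - 2 * (h i * h j) := fun i j => by ring
    simp only [this, Finset.sum_sub_distrib, Finset.sum_add_distrib, ← Finset.mul_sum,
      ← Finset.sum_mul, Finset.sum_const, Finset.card_univ, Fintype.card_fin, nsmul_eq_mul]
    ring
  rw [this]
  simp only [favg, Fintype.card_fin, smul_eq_mul]
  field_simp

/-- second part: variance of the conditional expectation given `σ 0`. -/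
theorem var_cond {n : ℕ} (g : Perm (Fin (n + 1)) → ℝ) :
    favg (fun i => (favg fun τ => g (Perm.decomposeFin.symm (i, τ))) ^ 2) -
      (favg fun i => favg fun τ => g (Perm.decomposeFin.symm (i, τ))) ^ 2
      ≤ (1 / (2 * ((n : ℝ) + 1))) * ∑ l, dform g 0 l := by
  set N : ℝ := (n : ℝ) + 1 with hN
  have hNpos : 0 < N := by positivity
  set h : Fin (n + 1) → ℝ := fun i => favg fun τ => g (Perm.decomposeFin.symm (i, τ)) with hh
  have key : ∀ (f : Perm (Fin (n + 1)) → ℝ) (i : Fin (n + 1)),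
      favg (fun τ => f (Perm.decomposeFin.symm (i, τ)))
        = N * favg (fun σ => if σ 0 = i then f σ else 0) := by
    intro f i
    rw [← favg_equiv Perm.decomposeFin.symm (fun σ => if σ 0 = i then f σ else 0), favg_prod]
    have : ∀ j : Fin (n + 1), (favg fun τ : Perm (Fin n) =>
        if (Perm.decomposeFin.symm (j, τ)) 0 = i then f (Perm.decomposeFin.symm (j, τ)) else 0)
        = if j = i then favg (fun τ => f (Perm.decomposeFin.symm (i, τ))) else 0 := by
      intro j
      simp only [Perm.decomposeFin_symm_apply_zero]
      by_cases hj : j = i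
      · subst hj; simp
      · simp [hj, favg]
    simp only [this]
    conv_rhs => rw [favg]
    simp only [Finset.sum_ite_eq', Finset.mem_univ, if_true, Fintype.card_fin, smul_eq_mul]
    push_cast
    rw [← hN]; field_simp
  have hij : ∀ i j, (h i - h j) ^ 2 ≤
      N * favg (fun σ : Perm (Fin (n + 1)) => if σ 0 = i then (g (swap i j * σ) - g σ) ^ 2 else 0) := by
    intro i j
    have e1 : h j = favg fun τ => g (swap i j * (Perm.decomposeFin.symm (i, τ))) := by
      rw [key (fun σ => g (swap i j * σ)) i, hh]
      simp only
      rw [key g j]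
      congr 1
      rw [← favg_equiv (Equiv.mulLeft (swap i j)) (fun σ => if σ 0 = j then g σ else 0)]
      congr 1; ext σ
      simp only [Equiv.coe_mulLeft, Perm.mul_apply]
      have : swap i j (σ 0) = j ↔ σ 0 = i := by
        rw [Equiv.swap_apply_eq_iff, Equiv.swap_apply_right]
      simp only [this]
    rw [← key (fun σ => (g (swap i j * σ) - g σ) ^ 2) i, e1, hh]
    simp only
    rw [← favg_sub]
    refine (favg_sq_le _).trans (le_of_eq ?_)
    congr 1; ext τ; ring
  have := var_pairs (Nat.succ_pos n) h
  rw [this]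
  push_cast
  rw [← hN]
  have h2 : ∑ i, ∑ j, (h i - h j) ^ 2 ≤ N * ∑ l, dform g 0 l := by
    calc ∑ i, ∑ j, (h i - h j) ^ 2 ≤ ∑ i, ∑ j, N * favg (fun σ : Perm (Fin (n + 1)) =>
            if σ 0 = i then (g (swap i j * σ) - g σ) ^ 2 else 0) :=
          Finset.sum_le_sum fun i _ => Finset.sum_le_sum fun j _ => hij i j
      _ = N * favg (fun σ : Perm (Fin (n + 1)) => ∑ j, (g (swap (σ 0) j * σ) - g σ) ^ 2) := by
          simp only [← Finset.mul_sum]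
          congr 1
          rw [Finset.sum_comm]
          simp only [← favg_sum]
          congr 1; ext σ
          refine Finset.sum_congr rfl fun j _ => ?_
          simp
      _ = N * ∑ l, dform g 0 l := by
          congr 1
          simp only [dform]
          rw [← favg_sum]
          congr 1; ext σ
          rw [← Equiv.sum_comp σ]
          refine Finset.sum_congr rfl fun l _ => ?_
          rw [Equiv.mul_swap_eq_swap_mul]
  calc (1 / (2 * N ^ 2)) * ∑ i, ∑ j, (h i - h j) ^ 2 ≤ (1 / (2 * N ^ 2)) * (N * ∑ l, dform g 0 l) :=
        mul_le_mul_of_nonneg_left h2 (by positivity)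
    _ = _ := by field_simp

theorem poincare_step0 {n : ℕ} (c : ℝ)
    (ih : ∀ g : Perm (Fin n) → ℝ, favg (fun σ => g σ ^ 2) - (favg g) ^ 2 ≤
      c * ∑ k, ∑ l, dform g k l) (g : Perm (Fin (n + 1)) → ℝ) :
    favg (fun σ => g σ ^ 2) - (favg g) ^ 2 ≤
      c * ∑ k : Fin n, ∑ l : Fin n, dform g k.succ l.succ
        + (1 / (2 * ((n : ℝ) + 1))) * ∑ l, dform g 0 l := by
  have h1 := var_cond g
  have hd : ∀ (f : Perm (Fin (n + 1)) → ℝ), favg f =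
      favg fun i => favg fun τ => f (Perm.decomposeFin.symm (i, τ)) := by
    intro f
    rw [← favg_equiv Perm.decomposeFin.symm f, favg_prod]
  rw [hd g, hd (fun σ => g σ ^ 2)]
  have h2 : (favg fun i => favg fun τ => (g (Perm.decomposeFin.symm (i, τ))) ^ 2)
      - favg (fun i => (favg fun τ => g (Perm.decomposeFin.symm (i, τ))) ^ 2)
      ≤ c * ∑ k : Fin n, ∑ l : Fin n, dform g k.succ l.succ := by
    rw [← favg_sub]
    refine (favg_mono _ _ fun i => ih fun τ => g (Perm.decomposeFin.symm (i, τ))).trans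
      (le_of_eq ?_)
    rw [favg_mul_left, favg_sum]
    congr 1
    refine Finset.sum_congr rfl fun k _ => ?_
    rw [favg_sum]
    refine Finset.sum_congr rfl fun l _ => ?_
    simp only [dform]
    conv_rhs => rw [hd]
    congr 1; ext i; congr 1; ext τ
    congr 3
    ext x
    refine Fin.cases ?_ (fun x => ?_) x
    · simp [Perm.decomposeFin_symm_apply_zero,
        Equiv.swap_apply_of_ne_of_ne (Fin.succ_ne_zero k).symm (Fin.succ_ne_zero l).symm]
    · have : swap k.succ l.succ x.succ = (swap k l x).succ := by
        simp only [Equiv.swap_apply_def, Fin.succ_inj]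
        split_ifs <;> rfl
      simp [Perm.decomposeFin_symm_apply_succ, this]
  linarith

theorem poincare_stepk {n : ℕ} (c : ℝ)
    (ih : ∀ g : Perm (Fin n) → ℝ, favg (fun σ => g σ ^ 2) - (favg g) ^ 2 ≤
      c * ∑ k, ∑ l, dform g k l) (g : Perm (Fin (n + 1)) → ℝ) (k : Fin (n + 1)) :
    favg (fun σ => g σ ^ 2) - (favg g) ^ 2 ≤
      c * (∑ i, ∑ j, dform g i j - 2 * ∑ l, dform g k l)
        + (1 / (2 * ((n : ℝ) + 1))) * ∑ l, dform g k l := by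
  have h := poincare_step0 c ih (fun σ => g (σ * swap 0 k))
  have hq : ∀ f : Perm (Fin (n + 1)) → ℝ, favg (fun σ => f (σ * swap 0 k)) = favg f :=
    fun f => favg_equiv (Equiv.mulRight (swap 0 k)) f
  rw [hq g, hq (fun σ => g σ ^ 2)] at h
  have hsymm : ∀ i j, dform g i j = dform g j i := by
    intro i j; simp only [dform, Equiv.swap_comm]
  have hdf : ∀ i j, dform (fun σ => g (σ * swap 0 k)) i j = dform g (swap 0 k i) (swap 0 k j) := by
    intro i j
    simp only [dform]
    rw [← hq fun σ => (g (σ * swap (swap 0 k i) (swap 0 k j)) - g σ) ^ 2]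
    congr 1; ext σ
    have : σ * swap 0 k * swap (swap 0 k i) (swap 0 k j) = σ * swap i j * swap 0 k := by
      rw [mul_assoc, mul_assoc, Equiv.mul_swap_eq_swap_mul (swap 0 k)]
      simp
    rw [this]
  simp only [hdf] at h
  have e1 : ∑ l, dform g (swap 0 k 0) (swap 0 k l) = ∑ l, dform g k l := by
    rw [Equiv.swap_apply_left]
    exact Equiv.sum_comp (swap 0 k) (fun l => dform g k l)
  rw [e1] at h
  have e2 : ∑ i : Fin n, ∑ j : Fin n, dform g (swap 0 k i.succ) (swap 0 k j.succ) =
      ∑ i, ∑ j, dform g i j - 2 * ∑ l, dform g k l := by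
    have : ∑ i, ∑ j, dform g i j = ∑ i, ∑ j, dform g (swap 0 k i) (swap 0 k j) := by
      rw [← Equiv.sum_comp (swap 0 k)]
      refine Finset.sum_congr rfl fun i _ => ?_
      rw [← Equiv.sum_comp (swap 0 k)]
    rw [this, ← e1]
    simp only [Fin.sum_univ_succ, Finset.sum_add_distrib]
    simp only [hsymm (swap 0 k (Fin.succ _)) (swap 0 k 0), dform_self]
    ring
  rw [e2] at h
  exact h

/-- Poincaré inequality for random transpositions. -/
theorem poincare (n : ℕ) : ∀ g : Perm (Fin n) → ℝ,
    favg (fun σ => g σ ^ 2) - (favg g) ^ 2 ≤ (1 / (2 * (n : ℝ))) * ∑ k, ∑ l, dform g k l := by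
  induction n with
  | zero =>
    intro g
    simp [favg]
  | succ n ih =>
    intro g
    have h := fun k => poincare_stepk _ ih g k
    set V := favg (fun σ => g σ ^ 2) - (favg g) ^ 2
    set S := ∑ k, ∑ l, dform g k l with hS
    have hS0 : 0 ≤ S := Finset.sum_nonneg fun _ _ => Finset.sum_nonneg fun _ _ => dform_nonneg _ _ _
    have hsum : ∑ k : Fin (n + 1), V ≤ ∑ k, (1 / (2 * (n : ℝ)) * (S - 2 * ∑ l, dform g k l)
        + (1 / (2 * ((n : ℝ) + 1))) * ∑ l, dform g k l) := Finset.sum_le_sum fun k _ => h k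
    simp only [Finset.sum_const, Finset.card_univ, Fintype.card_fin, nsmul_eq_mul,
      Finset.sum_add_distrib, ← Finset.mul_sum, Finset.sum_sub_distrib] at hsum
    rw [← hS] at hsum
    push_cast at hsum ⊢
    rcases Nat.eq_zero_or_pos n with rfl | hn
    · simp at hsum ⊢; linarith
    have hn' : (1 : ℝ) ≤ n := by exact_mod_cast hn
    have hx : 1 / (2 * (n : ℝ)) * (((n : ℝ) + 1) * S - 2 * S) + 1 / (2 * ((n : ℝ) + 1)) * S ≤ S / 2 := by
      have : 1 / (2 * (n : ℝ)) * (((n : ℝ) + 1) * S - 2 * S) + 1 / (2 * ((n : ℝ) + 1)) * S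
        = S / 2 - S * (1 / (2 * n) - 1 / (2 * (n + 1))) := by field_simp; ring
      rw [this]
      have : 1 / (2 * ((n : ℝ) + 1)) ≤ 1 / (2 * (n : ℝ)) :=
        one_div_le_one_div_of_le (by positivity) (by linarith)
      nlinarith
    rw [div_mul_eq_mul_div, le_div_iff₀ (by positivity)]
    nlinarith

open Equiv

/-- Kronecker delta. -/
def kd {n : ℕ} (i j : Fin n) : ℝ := if i = j then 1 else 0

theorem kd_self {n : ℕ} (i : Fin n) : kd i i = 1 := by simp [kd]
theorem kd_ne {n : ℕ} {i j : Fin n} (h : i ≠ j) : kd i j = 0 := by simp [kd, h]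

theorem exists_perm_tuple {n r : ℕ} (f g : Fin r → Fin n) (hf : Function.Injective f)
    (hg : Function.Injective g) : ∃ τ : Perm (Fin n), ∀ i, τ (f i) = g i := by
  have := Equiv.Perm.isMultiplyPretransitive (Fin n) r
  obtain ⟨τ, h⟩ := this.exists_smul_eq ⟨f, hf⟩ ⟨g, hg⟩
  refine ⟨τ, fun i => ?_⟩
  have := congrArg (fun e => e i) h
  simpa using this

/-- Fourth mixed moment. -/
noncomputable def mom4 {n : ℕ} (a : Fin n → ℝ) (k l p q : Fin n) : ℝ :=
  favg fun σ : Perm (Fin n) => a (σ k) * a (σ l) * (a (σ p) * a (σ q))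

/-- Second mixed moment. -/
noncomputable def mom2 {n : ℕ} (a : Fin n → ℝ) (k l : Fin n) : ℝ :=
  favg fun σ : Perm (Fin n) => a (σ k) * a (σ l)

theorem mom4_perm {n : ℕ} (a : Fin n → ℝ) (τ : Perm (Fin n)) (k l p q : Fin n) :
    mom4 a (τ k) (τ l) (τ p) (τ q) = mom4 a k l p q := by
  simp only [mom4]
  exact favg_equiv (Equiv.mulRight τ) fun σ : Perm (Fin n) =>
    a (σ k) * a (σ l) * (a (σ p) * a (σ q))

theorem mom2_perm {n : ℕ} (a : Fin n → ℝ) (τ : Perm (Fin n)) (k l : Fin n) :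
    mom2 a (τ k) (τ l) = mom2 a k l := by
  simp only [mom2]
  exact favg_equiv (Equiv.mulRight τ) fun σ : Perm (Fin n) => a (σ k) * a (σ l)

theorem mom4_bound {n : ℕ} (a : Fin n → ℝ) (b : ℝ) (hb : ∀ i, a i ^ 2 ≤ b) (k l p q : Fin n) :
    |mom4 a k l p q| ≤ b ^ 2 := by
  have hb2 : ∀ i j, |a i * a j| ≤ b := by
    intro i j
    rw [abs_le]; constructor <;> nlinarith [hb i, hb j, sq_nonneg (a i + a j), sq_nonneg (a i - a j)]
  have hb0 : 0 ≤ b := (sq_nonneg _).trans (hb k)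
  refine (abs_favg_le _).trans ((favg_mono _ (fun _ => b ^ 2) fun σ => ?_).trans ?_)
  · rw [abs_mul, sq]
    exact mul_le_mul (hb2 _ _) (hb2 _ _) (abs_nonneg _) hb0
  · rw [favg_const]

theorem mom2_rep {n : ℕ} (hn : 2 ≤ n) (a : Fin n → ℝ) :
    ∃ β γ : ℝ, ∀ k l, mom2 a k l = β + γ * kd k l := by
  let i0 : Fin n := ⟨0, by omega⟩
  let i1 : Fin n := ⟨1, by omega⟩
  refine ⟨mom2 a i0 i1, mom2 a i0 i0 - mom2 a i0 i1, fun k l => ?_⟩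
  by_cases h : k = l
  · subst h
    obtain ⟨τ, hτ⟩ := exists_perm_tuple ![i0] ![k] (Function.injective_of_subsingleton _)
      (Function.injective_of_subsingleton _)
    have := hτ 0
    simp only [Matrix.cons_val_zero] at this
    rw [← this, mom2_perm, kd_self]; ring
  · obtain ⟨τ, hτ⟩ := exists_perm_tuple ![i0, i1] ![k, l]
      (by intro x y; fin_cases x <;> fin_cases y <;> simp [i0, i1])
      (by intro x y; fin_cases x <;> fin_cases y <;> simp [h, Ne.symm h])
    have h0 := hτ 0
    have h1 := hτ 1
    simp only [Matrix.cons_val_zero, Matrix.cons_val_one] at h0 h1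
    rw [kd_ne h, ← h0, ← h1, mom2_perm]; ring

theorem mom4_rep {n : ℕ} (hn : 4 ≤ n) (a : Fin n → ℝ) (b : ℝ) (hb : ∀ i, a i ^ 2 ≤ b) :
    ∃ α β γ ζ η : ℝ, |γ| ≤ 4 * b ^ 2 ∧ |η| ≤ 58 * b ^ 2 ∧ ∀ k l p q, mom4 a k l p q =
      α + β * (kd k l + kd k p + kd k q + kd l p + kd l q + kd p q)
      + γ * (kd k l * kd p q + kd k p * kd l q + kd k q * kd l p)
      + ζ * (kd k l * kd l p + kd k l * kd l q + kd k p * kd p q + kd l p * kd p q)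
      + η * (kd k l * kd l p * kd p q) := by
  let i0 : Fin n := ⟨0, by omega⟩
  let i1 : Fin n := ⟨1, by omega⟩
  let i2 : Fin n := ⟨2, by omega⟩
  let i3 : Fin n := ⟨3, by omega⟩
  have E1 : ∀ k, mom4 a k k k k = mom4 a i0 i0 i0 i0 := by
    intro k
    obtain ⟨τ, hτ⟩ := exists_perm_tuple ![i0] ![k] (Function.injective_of_subsingleton _)
      (Function.injective_of_subsingleton _)
    have := hτ 0
    simp only [Matrix.cons_val_zero] at this
    rw [← this, mom4_perm]
  have E2' : ∀ k l, k ≠ l → ∃ τ : Perm (Fin n), τ i0 = k ∧ τ i1 = l := by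
    intro k l h
    obtain ⟨τ, hτ⟩ := exists_perm_tuple ![i0, i1] ![k, l]
      (by intro x y; fin_cases x <;> fin_cases y <;> simp [i0, i1])
      (by intro x y; fin_cases x <;> fin_cases y <;> simp [h, Ne.symm h])
    exact ⟨τ, hτ 0, hτ 1⟩
  have E3' : ∀ k l p, k ≠ l → k ≠ p → l ≠ p → ∃ τ : Perm (Fin n), τ i0 = k ∧ τ i1 = l ∧ τ i2 = p := by
    intro k l p h1 h2 h3
    obtain ⟨τ, hτ⟩ := exists_perm_tuple ![i0, i1, i2] ![k, l, p]
      (by intro x y; fin_cases x <;> fin_cases y <;> simp [i0, i1, i2])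
      (by intro x y; fin_cases x <;> fin_cases y <;>
            simp [h1, Ne.symm h1, h2, Ne.symm h2, h3, Ne.symm h3])
    exact ⟨τ, hτ 0, hτ 1, hτ 2⟩
  have E4 : ∀ k l p q, k ≠ l → k ≠ p → k ≠ q → l ≠ p → l ≠ q → p ≠ q →
      mom4 a k l p q = mom4 a i0 i1 i2 i3 := by
    intro k l p q h1 h2 h3 h4 h5 h6
    obtain ⟨τ, hτ⟩ := exists_perm_tuple ![i0, i1, i2, i3] ![k, l, p, q]
      (by intro x y; fin_cases x <;> fin_cases y <;> simp [i0, i1, i2, i3])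
      (by intro x y; fin_cases x <;> fin_cases y <;>
            simp [h1, Ne.symm h1, h2, Ne.symm h2, h3, Ne.symm h3, h4, Ne.symm h4,
              h5, Ne.symm h5, h6, Ne.symm h6])
    have h0 : τ i0 = k := hτ 0
    have h1 : τ i1 = l := hτ 1
    have h2 : τ i2 = p := hτ 2
    have h3 : τ i3 = q := hτ 3
    rw [← h0, ← h1, ← h2, ← h3, mom4_perm]
  have E22 : ∀ k l, k ≠ l → mom4 a k k l l = mom4 a i0 i0 i1 i1 := by
    intro k l h
    obtain ⟨τ, h0, h1⟩ := E2' k l h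
    rw [← h0, ← h1, mom4_perm]
  have E31 : ∀ k l, k ≠ l → mom4 a k k k l = mom4 a i0 i0 i0 i1 := by
    intro k l h
    obtain ⟨τ, h0, h1⟩ := E2' k l h
    rw [← h0, ← h1, mom4_perm]
  have E211 : ∀ k l p, k ≠ l → k ≠ p → l ≠ p → mom4 a k k l p = mom4 a i0 i0 i1 i2 := by
    intro k l p h h' h''
    obtain ⟨τ, h0, h1, h2⟩ := E3' k l p h h' h''
    rw [← h0, ← h1, ← h2, mom4_perm]
  -- symmetries
  have S12 : ∀ k l p q, mom4 a k l p q = mom4 a l k p q := by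
    intro k l p q; simp only [mom4]; congr 1; ext σ; ring
  have S23 : ∀ k l p q, mom4 a k l p q = mom4 a k p l q := by
    intro k l p q; simp only [mom4]; congr 1; ext σ; ring
  have S34 : ∀ k l p q, mom4 a k l p q = mom4 a k l q p := by
    intro k l p q; simp only [mom4]; congr 1; ext σ; ring
  have B := mom4_bound a b hb
  have B1 := abs_le.1 (B i0 i1 i2 i3)
  have B2 := abs_le.1 (B i0 i0 i1 i2)
  have B3 := abs_le.1 (B i0 i0 i1 i1)
  have B4 := abs_le.1 (B i0 i0 i0 i1)
  have B5 := abs_le.1 (B i0 i0 i0 i0)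
  generalize mom4 a i0 i1 i2 i3 = e1111 at *
  generalize mom4 a i0 i0 i1 i2 = e211 at *
  generalize mom4 a i0 i0 i1 i1 = e22 at *
  generalize mom4 a i0 i0 i0 i1 = e31 at *
  generalize mom4 a i0 i0 i0 i0 = e4 at *
  refine ⟨e1111, e211 - e1111, e22 - 2 * e211 + e1111, e31 - 3 * e211 + 2 * e1111,
    e4 - 3 * e22 - 4 * e31 + 12 * e211 - 6 * e1111, ?_, ?_, ?_⟩
  · rw [abs_le]; constructor <;> linarith
  · rw [abs_le]; constructor <;> linarith [sq_nonneg b]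
  intro k l p q
  by_cases h1 : k = l
  · subst h1
    by_cases h2 : k = p
    · subst h2
      by_cases h3 : k = q
      · subst h3; rw [E1]; simp only [kd_self]; ring
      · rw [E31 _ _ h3]; simp only [kd_self, kd_ne h3]; ring
    · by_cases h3 : k = q
      · subst h3; rw [S34, E31 _ _ h2]; simp only [kd_self, kd_ne h2, kd_ne (Ne.symm h2)]; ring
      · by_cases h4 : p = q
        · subst h4; rw [E22 _ _ h2]; simp only [kd_self, kd_ne h2]; ring
        · rw [E211 _ _ _ h2 h3 h4]; simp only [kd_self, kd_ne h2, kd_ne h3, kd_ne h4]; ring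
  · by_cases h2 : k = p
    · subst h2
      by_cases h3 : k = q
      · subst h3; rw [S23, S34, E31 _ _ h1]
        simp only [kd_self, kd_ne h1, kd_ne (Ne.symm h1)]; ring
      · by_cases h4 : l = q
        · subst h4; rw [S23, E22 _ _ h1]
          simp only [kd_self, kd_ne h1, kd_ne (Ne.symm h1)]; ring
        · rw [S23, E211 _ _ _ h1 h3 h4]
          simp only [kd_self, kd_ne h1, kd_ne (Ne.symm h1), kd_ne h3, kd_ne h4]; ring
    · by_cases h3 : k = q
      · subst h3
        by_cases h4 : l = p
        · subst h4; rw [S34, S23, E22 _ _ h1]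
          simp only [kd_self, kd_ne h1, kd_ne (Ne.symm h1)]; ring
        · rw [S34, S23, E211 _ _ _ h1 h2 h4]
          simp only [kd_self, kd_ne h1, kd_ne (Ne.symm h1), kd_ne h2, kd_ne (Ne.symm h2), kd_ne h4]
          ring
      · by_cases h4 : l = p
        · subst h4
          by_cases h5 : l = q
          · subst h5; rw [S12, S23, S34, S12, S23, E31 _ _ (Ne.symm h1)]
            simp only [kd_self, kd_ne h1]; ring
          · rw [S12, S23, E211 _ _ _ (Ne.symm h1) h5 h3]
            simp only [kd_self, kd_ne h1, kd_ne h3, kd_ne h5]; ring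
        · by_cases h5 : l = q
          · subst h5
            rw [S12, S34, S23, E211 _ _ _ (Ne.symm h1) h4 h2]
            simp only [kd_self, kd_ne h1, kd_ne h2, kd_ne h4, kd_ne (Ne.symm h4)]; ring
          · by_cases h6 : p = q
            · subst h6
              rw [S23, S12, S34, S23, E211 _ _ _ (Ne.symm h2) (Ne.symm h4) h1]
              simp only [kd_self, kd_ne h1, kd_ne h2, kd_ne h4]; ring
            · rw [E4 _ _ _ _ h1 h2 h3 h4 h5 h6]
              simp only [kd_ne h1, kd_ne h2, kd_ne h3, kd_ne h4, kd_ne h5, kd_ne h6]; ring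

/-- Quadratic form. -/
def qf {n : ℕ} (A : Fin n → Fin n → ℝ) (u : Fin n → ℝ) : ℝ := ∑ k, ∑ l, A k l * (u k * u l)

theorem favg_qf {n : ℕ} (a : Fin n → ℝ) (A : Fin n → Fin n → ℝ) :
    favg (fun σ : Perm (Fin n) => qf A fun k => a (σ k)) = ∑ k, ∑ l, A k l * mom2 a k l := by
  simp only [qf, favg_sum, favg_mul_left, mom2]

theorem favg_qf_sq {n : ℕ} (a : Fin n → ℝ) (A : Fin n → Fin n → ℝ) :
    favg (fun σ : Perm (Fin n) => (qf A fun k => a (σ k)) ^ 2)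
      = ∑ k, ∑ l, ∑ p, ∑ q, A k l * A p q * mom4 a k l p q := by
  simp only [mom4, ← favg_mul_left, ← favg_sum]
  congr 1; ext σ
  simp only [qf]
  rw [sq, Finset.sum_mul]
  refine Finset.sum_congr rfl fun k _ => ?_
  rw [Finset.sum_mul]
  refine Finset.sum_congr rfl fun l _ => ?_
  rw [Finset.mul_sum]
  refine Finset.sum_congr rfl fun p _ => ?_
  rw [Finset.mul_sum]
  refine Finset.sum_congr rfl fun q _ => ?_
  ring

theorem qf_first {n : ℕ} (A : Fin n → Fin n → ℝ) (hr : ∀ k, ∑ l, A k l = 0) (β γ : ℝ) :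
    ∑ k, ∑ l, A k l * (β + γ * kd k l) = γ * ∑ k, A k k := by
  simp only [mul_add, Finset.sum_add_distrib, ← Finset.sum_mul, hr, kd, Finset.mul_sum]
  simp [mul_comm]

theorem qf_second {n : ℕ} (A : Fin n → Fin n → ℝ) (hs : ∀ k l, A k l = A l k)
    (hr : ∀ k, ∑ l, A k l = 0) (α β γ ζ η : ℝ) :
    ∑ k, ∑ l, ∑ p, ∑ q, A k l * A p q * (
      α + β * (kd k l + kd k p + kd k q + kd l p + kd l q + kd p q)
      + γ * (kd k l * kd p q + kd k p * kd l q + kd k q * kd l p)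
      + ζ * (kd k l * kd l p + kd k l * kd l q + kd k p * kd p q + kd l p * kd p q)
      + η * (kd k l * kd l p * kd p q)) =
    γ * ((∑ k, A k k) ^ 2 + 2 * ∑ k, ∑ l, A k l ^ 2) + η * ∑ k, A k k ^ 2 := by
  have hr' : ∀ l, ∑ k, A k l = 0 := fun l => by rw [← hr l]; exact Finset.sum_congr rfl fun k _ => hs _ _
  have h1 : ∀ k l p : Fin n, ∑ q, A k l * A p q * (
      α + β * (kd k l + kd k p + kd k q + kd l p + kd l q + kd p q)
      + γ * (kd k l * kd p q + kd k p * kd l q + kd k q * kd l p)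
      + ζ * (kd k l * kd l p + kd k l * kd l q + kd k p * kd p q + kd l p * kd p q)
      + η * (kd k l * kd l p * kd p q)) =
      A k l * (β * (A p k + A p l + A p p) + γ * (kd k l * A p p + kd k p * A p l + kd l p * A p k)
      + ζ * (kd k l * A p l + kd k p * A p p + kd l p * A p p) + η * (kd k l * kd l p * A p p)) := by
    intro k l p
    have hq : ∀ j, ∑ q, A p q * kd j q = A p j := by intro j; simp [kd]
    have : ∀ q, A k l * A p q * (
      α + β * (kd k l + kd k p + kd k q + kd l p + kd l q + kd p q)
      + γ * (kd k l * kd p q + kd k p * kd l q + kd k q * kd l p)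
      + ζ * (kd k l * kd l p + kd k l * kd l q + kd k p * kd p q + kd l p * kd p q)
      + η * (kd k l * kd l p * kd p q)) =
      (A k l * (α + β * (kd k l + kd k p + kd l p) + ζ * (kd k l * kd l p))) * A p q
      + (A k l * (β + γ * kd l p)) * (A p q * kd k q)
      + (A k l * (β + γ * kd k p + ζ * kd k l)) * (A p q * kd l q)
      + (A k l * (β + γ * kd k l + ζ * (kd k p + kd l p) + η * (kd k l * kd l p))) * (A p q * kd p q) := by
      intro q; ring
    simp only [this, Finset.sum_add_distrib, ← Finset.mul_sum, hq, hr]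
    ring
  have h2 : ∀ k l : Fin n, ∑ p, A k l * (β * (A p k + A p l + A p p)
      + γ * (kd k l * A p p + kd k p * A p l + kd l p * A p k)
      + ζ * (kd k l * A p l + kd k p * A p p + kd l p * A p p) + η * (kd k l * kd l p * A p p)) =
      A k l * (β * (∑ p, A p p) + γ * (kd k l * ∑ p, A p p + 2 * A k l) + ζ * (A k k + A l l)
        + η * (kd k l * A l l)) := by
    intro k l
    have hq : ∀ (f : Fin n → ℝ) j, ∑ p, kd j p * f p = f j := by intro f j; simp [kd]
    have : ∀ p, A k l * (β * (A p k + A p l + A p p)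
      + γ * (kd k l * A p p + kd k p * A p l + kd l p * A p k)
      + ζ * (kd k l * A p l + kd k p * A p p + kd l p * A p p) + η * (kd k l * kd l p * A p p)) =
      A k l * β * A p k + A k l * (β + ζ * kd k l) * A p l + A k l * (β + γ * kd k l) * A p p
      + A k l * γ * (kd k p * A p l) + A k l * γ * (kd l p * A p k) + A k l * ζ * (kd k p * A p p)
      + A k l * (ζ + η * kd k l) * (kd l p * A p p) := by intro p; ring
    simp only [this, Finset.sum_add_distrib, ← Finset.mul_sum, hr', hq (fun p => A p l),
      hq (fun p => A p k), hq (fun p => A p p)]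
    rw [hs l k]; ring
  simp only [h1, h2]
  set T := ∑ k, A k k with hT
  have h3 : ∀ k : Fin n, ∑ l, A k l * (β * T + γ * (kd k l * T + 2 * A k l) + ζ * (A k k + A l l)
        + η * (kd k l * A l l)) = γ * T * A k k + 2 * γ * ∑ l, A k l ^ 2 + ζ * ∑ l, A k l * A l l
        + η * A k k ^ 2 := by
    intro k
    have hq : ∀ (f : Fin n → ℝ) j, ∑ p, kd j p * f p = f j := by intro f j; simp [kd]
    have : ∀ l, A k l * (β * T + γ * (kd k l * T + 2 * A k l) + ζ * (A k k + A l l)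
        + η * (kd k l * A l l)) = (β * T + ζ * A k k) * A k l + γ * T * (kd k l * A k l)
        + 2 * γ * A k l ^ 2 + ζ * (A k l * A l l) + η * (kd k l * (A k l * A l l)) := by intro l; ring
    simp only [this, Finset.sum_add_distrib, ← Finset.mul_sum, hr, hq (fun l => A k l),
      hq (fun l => A k l * A l l)]
    ring
  simp only [h3, Finset.sum_add_distrib, ← Finset.mul_sum]
  have h4 : ∑ k, ∑ l, A k l * A l l = 0 := by
    rw [Finset.sum_comm]
    simp only [← Finset.sum_mul, hr', zero_mul, Finset.sum_const_zero]
  rw [h4, ← hT]; ring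

/-- The centering projection. -/
noncomputable def cproj (n : ℕ) (k l : Fin n) : ℝ := kd k l - 1 / (n : ℝ)

theorem cproj_row {n : ℕ} (hn : 0 < n) (k : Fin n) : ∑ l, cproj n k l = 0 := by
  have : (n : ℝ) ≠ 0 := by positivity
  simp [cproj, kd, Finset.sum_sub_distrib, this]

theorem cproj_symm {n : ℕ} (k l : Fin n) : cproj n k l = cproj n l k := by
  simp [cproj, kd, eq_comm]

theorem cproj_trace {n : ℕ} (hn : 0 < n) : ∑ k, cproj n k k = (n : ℝ) - 1 := by
  have : (n : ℝ) ≠ 0 := by positivity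
  simp [cproj, kd, this]

theorem cproj_idem {n : ℕ} (hn : 0 < n) (k l : Fin n) :
    ∑ j, cproj n k j * cproj n j l = cproj n k l := by
  have h0 : (n : ℝ) ≠ 0 := by positivity
  have h1 : ∀ j, cproj n k j * cproj n j l = kd k j * cproj n j l - 1 / (n : ℝ) * cproj n j l := by
    intro j; simp only [cproj]; ring
  have h2 : ∑ j, cproj n j l = 0 := by
    rw [← cproj_row hn l]; exact Finset.sum_congr rfl fun k _ => cproj_symm _ _
  simp only [h1, Finset.sum_sub_distrib, ← Finset.mul_sum, h2]
  simp [kd]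

theorem cproj_diag {n : ℕ} (hn : 0 < n) : ∑ k, cproj n k k ^ 2 = ((n : ℝ) - 1) ^ 2 / n := by
  have : (n : ℝ) ≠ 0 := by positivity
  simp [cproj, kd]
  field_simp

theorem qf_cproj {n : ℕ} (u : Fin n → ℝ) (h0 : ∑ i, u i = 0) :
    qf (cproj n) u = ∑ i, u i ^ 2 := by
  have : ∀ k l, cproj n k l * (u k * u l) = kd k l * (u k * u l) - 1 / (n : ℝ) * u k * u l := by
    intro k l; simp only [cproj]; ring
  simp only [qf, this, Finset.sum_sub_distrib, ← Finset.mul_sum, h0]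
  simp [kd, sq]

theorem sum_perm {n : ℕ} (a : Fin n → ℝ) (σ : Perm (Fin n)) : ∑ i, a (σ i) = ∑ i, a i :=
  Equiv.sum_comp σ a

theorem qf_mean {n : ℕ} (hn : 2 ≤ n) (a : Fin n → ℝ) (h0 : ∑ i, a i = 0) (h1 : ∑ i, a i ^ 2 = 1)
    (A : Fin n → Fin n → ℝ) (hr : ∀ k, ∑ l, A k l = 0) :
    favg (fun σ : Perm (Fin n) => qf A fun k => a (σ k)) = (∑ k, A k k) / ((n : ℝ) - 1) := by
  obtain ⟨β, γ, h⟩ := mom2_rep hn a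
  have key : ∀ (A : Fin n → Fin n → ℝ) (hr : ∀ k, ∑ l, A k l = 0),
      favg (fun σ : Perm (Fin n) => qf A fun k => a (σ k)) = γ * ∑ k, A k k := by
    intro A hr
    rw [favg_qf]; simp only [h]; exact qf_first A hr β γ
  have hc := key (cproj n) (cproj_row (by omega))
  have : (fun σ : Perm (Fin n) => qf (cproj n) fun k => a (σ k)) = fun _ => (1 : ℝ) := by
    ext σ
    rw [qf_cproj _ (by rw [sum_perm a σ, h0]), sum_perm (fun i => a i ^ 2) σ, h1]
  rw [this, favg_const, cproj_trace (by omega)] at hc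
  have hn' : (2 : ℝ) ≤ n := by exact_mod_cast hn
  have : (n : ℝ) - 1 ≠ 0 := by linarith
  rw [key A hr, eq_div_iff this, mul_right_comm, ← hc, one_mul]

theorem qf_sq_mean {n : ℕ} (hn : 4 ≤ n) (a : Fin n → ℝ) (h0 : ∑ i, a i = 0)
    (h1 : ∑ i, a i ^ 2 = 1) (b : ℝ) (hb : ∀ i, a i ^ 2 ≤ b) :
    ∃ γ η : ℝ, |γ| ≤ 4 * b ^ 2 ∧ |η| ≤ 58 * b ^ 2 ∧
      γ * ((n : ℝ) ^ 2 - 1) = 1 - η * (((n : ℝ) - 1) ^ 2 / n) ∧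
      ∀ (A : Fin n → Fin n → ℝ), (∀ k l, A k l = A l k) → (∀ k, ∑ l, A k l = 0) →
      favg (fun σ : Perm (Fin n) => (qf A fun k => a (σ k)) ^ 2) =
        γ * ((∑ k, A k k) ^ 2 + 2 * ∑ k, ∑ l, A k l ^ 2) + η * ∑ k, A k k ^ 2 := by
  obtain ⟨α, β, γ, ζ, η, hγ, hη, h⟩ := mom4_rep hn a b hb
  have key : ∀ (A : Fin n → Fin n → ℝ), (∀ k l, A k l = A l k) → (∀ k, ∑ l, A k l = 0) →
      favg (fun σ : Perm (Fin n) => (qf A fun k => a (σ k)) ^ 2) =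
        γ * ((∑ k, A k k) ^ 2 + 2 * ∑ k, ∑ l, A k l ^ 2) + η * ∑ k, A k k ^ 2 := by
    intro A hs hr
    rw [favg_qf_sq]; simp only [h]; exact qf_second A hs hr α β γ ζ η
  refine ⟨γ, η, hγ, hη, ?_, key⟩
  have hc := key (cproj n) cproj_symm (cproj_row (by omega))
  have : (fun σ : Perm (Fin n) => (qf (cproj n) fun k => a (σ k)) ^ 2) = fun _ => (1 : ℝ) := by
    ext σ
    rw [qf_cproj _ (by rw [sum_perm a σ, h0]), sum_perm (fun i => a i ^ 2) σ, h1, one_pow]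
  have h2 : ∑ k, ∑ l, cproj n k l ^ 2 = (n : ℝ) - 1 := by
    rw [← cproj_trace (n := n) (by omega)]
    refine Finset.sum_congr rfl fun k _ => ?_
    rw [← cproj_idem (by omega)]
    refine Finset.sum_congr rfl fun l _ => ?_
    rw [sq, cproj_symm l k]
  rw [this, favg_const, cproj_trace (by omega), h2, cproj_diag (by omega)] at hc
  linarith

open Equiv

/-- Symmetric idempotent matrix with zero row sums and trace `m`. -/
structure IsProj {n : ℕ} (P : Fin n → Fin n → ℝ) (m : ℝ) : Prop where
  symm : ∀ k l, P k l = P l k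
  idem : ∀ k l, ∑ j, P k j * P j l = P k l
  row : ∀ k, ∑ l, P k l = 0
  tr : ∑ k, P k k = m

/-- Score vectors. -/
structure GoodVec {n : ℕ} (a : Fin n → ℝ) : Prop where
  sum0 : ∑ i, a i = 0
  sum1 : ∑ i, a i ^ 2 = 1
  bd : ∀ i, a i ^ 2 ≤ 3 / (n : ℝ)

/-- Matrix times vector. -/
def mv {n : ℕ} (P : Fin n → Fin n → ℝ) (u : Fin n → ℝ) (k : Fin n) : ℝ := ∑ l, P k l * u l

theorem qf_eq_mv {n : ℕ} (P : Fin n → Fin n → ℝ) (u : Fin n → ℝ) :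
    qf P u = ∑ k, u k * mv P u k := by
  simp only [qf, mv, Finset.mul_sum]
  refine Finset.sum_congr rfl fun k _ => Finset.sum_congr rfl fun l _ => ?_
  ring

theorem isProj_cproj {n : ℕ} (hn : 0 < n) : IsProj (cproj n) ((n : ℝ) - 1) :=
  ⟨cproj_symm, cproj_idem hn, cproj_row hn, cproj_trace hn⟩

section
variable {n : ℕ} {P : Fin n → Fin n → ℝ} {m : ℝ}

theorem IsProj.mv_mv (h : IsProj P m) (u : Fin n → ℝ) (k : Fin n) : mv P (mv P u) k = mv P u k := by
  simp only [mv, Finset.mul_sum]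
  rw [Finset.sum_comm]
  refine Finset.sum_congr rfl fun l _ => ?_
  rw [← h.idem k l, Finset.sum_mul]
  exact Finset.sum_congr rfl fun j _ => by ring

theorem IsProj.mv_adj (h : IsProj P m) (u v : Fin n → ℝ) :
    ∑ k, u k * mv P v k = ∑ k, mv P u k * v k := by
  simp only [mv, Finset.mul_sum, Finset.sum_mul]
  rw [Finset.sum_comm]
  refine Finset.sum_congr rfl fun l _ => Finset.sum_congr rfl fun j _ => ?_
  rw [h.symm j l]; ring

theorem IsProj.norm_mv (h : IsProj P m) (u : Fin n → ℝ) : ∑ k, mv P u k ^ 2 = qf P u := by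
  have h1 : ∑ k, u k * mv P (mv P u) k = ∑ k, mv P u k * mv P u k := h.mv_adj u (mv P u)
  simp only [h.mv_mv] at h1
  rw [qf_eq_mv, h1]
  exact Finset.sum_congr rfl fun k _ => by ring

theorem IsProj.qf_nonneg (h : IsProj P m) (u : Fin n → ℝ) : 0 ≤ qf P u := by
  rw [← h.norm_mv]; exact Finset.sum_nonneg fun _ _ => sq_nonneg _

theorem IsProj.qf_le (h : IsProj P m) (u : Fin n → ℝ) : qf P u ≤ ∑ k, u k ^ 2 := by
  have h0 : 0 ≤ ∑ k, (u k - mv P u k) ^ 2 := Finset.sum_nonneg fun _ _ => sq_nonneg _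
  have : ∀ k, (u k - mv P u k) ^ 2 = u k ^ 2 - 2 * (u k * mv P u k) + mv P u k ^ 2 :=
    fun k => by ring
  simp only [this, Finset.sum_add_distrib, Finset.sum_sub_distrib, ← Finset.mul_sum] at h0
  rw [h.norm_mv, ← qf_eq_mv] at h0
  linarith

theorem IsProj.diag_eq (h : IsProj P m) (k : Fin n) : ∑ j, P k j ^ 2 = P k k := by
  rw [← h.idem k k]
  exact Finset.sum_congr rfl fun j _ => by rw [sq, h.symm j k]

theorem IsProj.sq_le (h : IsProj P m) (k l : Fin n) : P k l ^ 2 ≤ P k k := by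
  rw [← h.diag_eq k]
  exact Finset.single_le_sum (f := fun j => P k j ^ 2) (fun j _ => sq_nonneg _) (Finset.mem_univ l)

theorem IsProj.diag_nonneg (h : IsProj P m) (k : Fin n) : 0 ≤ P k k :=
  (sq_nonneg _).trans (h.sq_le k k)

theorem IsProj.diag_le (h : IsProj P m) (k : Fin n) : P k k ≤ 1 := by
  nlinarith [h.sq_le k k, h.diag_nonneg k]

theorem IsProj.abs_le (h : IsProj P m) (k l : Fin n) : |P k l| ≤ 1 := by
  rw [← sq_le_one_iff_abs_le_one]
  exact (h.sq_le k l).trans (h.diag_le k)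

theorem IsProj.tr_sq (h : IsProj P m) : ∑ k, ∑ l, P k l ^ 2 = m := by
  rw [← h.tr]; exact Finset.sum_congr rfl fun k _ => h.diag_eq k

theorem IsProj.cs (h : IsProj P m) : m ^ 2 ≤ n * ∑ k, P k k ^ 2 := by
  have := sq_sum_le_card_mul_sum_sq (s := (Finset.univ : Finset (Fin n))) (f := fun k => P k k)
  rw [h.tr] at this
  simpa using this

theorem IsProj.diag_sq_le (h : IsProj P m) : ∑ k, P k k ^ 2 ≤ m := by
  rw [← h.tr]; exact Finset.sum_le_sum fun k _ => by nlinarith [h.diag_le k, h.diag_nonneg k]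

theorem IsProj.m_le (h : IsProj P m) : m ≤ n := by
  rw [← h.tr]
  refine (Finset.sum_le_sum fun k _ => h.diag_le k).trans ?_
  simp

theorem qf_swap (h : IsProj P m) (u : Fin n → ℝ) (k l : Fin n) :
    qf P (fun j => u (swap k l j)) - qf P u
      = 2 * (u l - u k) * (mv P u k - mv P u l)
        + (u l - u k) ^ 2 * (P k k + P l l - 2 * P k l) := by
  have hu : ∀ j, u (swap k l j) = u j + (u l - u k) * (kd k j - kd l j) := by
    intro j
    by_cases h1 : j = k
    · subst h1
      by_cases h2 : j = l
      · subst h2; simp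
      · rw [Equiv.swap_apply_left, kd_self, kd_ne (Ne.symm h2)]; ring
    · by_cases h2 : j = l
      · subst h2; rw [Equiv.swap_apply_right, kd_self, kd_ne (Ne.symm h1)]; ring
      · rw [Equiv.swap_apply_of_ne_of_ne h1 h2, kd_ne (Ne.symm h1), kd_ne (Ne.symm h2)]; ring
  set δ := u l - u k
  have hq : ∀ (f : Fin n → ℝ) j, ∑ p, kd j p * f p = f j := by intro f j; simp [kd]
  have hmv : ∀ i, mv P (fun j => u (swap k l j)) i = mv P u i + δ * (P i k - P i l) := by
    intro i
    simp only [mv, hu]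
    have : ∀ j, P i j * (u j + δ * (kd k j - kd l j)) =
      P i j * u j + (δ * (kd k j * P i j) - δ * (kd l j * P i j)) := fun j => by ring
    simp only [this, Finset.sum_add_distrib, Finset.sum_sub_distrib, ← Finset.mul_sum,
      hq (fun j => P i j)]
    ring
  have hPu : ∀ k, ∑ j, u j * P j k = mv P u k := by
    intro k; simp only [mv]; exact Finset.sum_congr rfl fun j _ => by rw [h.symm j k]; ring
  rw [qf_eq_mv, qf_eq_mv]
  simp only [hmv]
  simp only [hu]
  have : ∀ j, (u j + δ * (kd k j - kd l j)) * (mv P u j + δ * (P j k - P j l)) =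
    u j * mv P u j + (δ * (u j * P j k) - δ * (u j * P j l)) + (δ * (kd k j * mv P u j)
     - δ * (kd l j * mv P u j)) + ((δ ^ 2 * (kd k j * P j k) - δ ^ 2 * (kd k j * P j l))
     - (δ ^ 2 * (kd l j * P j k) - δ ^ 2 * (kd l j * P j l))) := fun j => by ring
  simp only [this, Finset.sum_add_distrib, Finset.sum_sub_distrib, ← Finset.mul_sum, hPu,
      hq (fun j => mv P u j), hq (fun j => P j k), hq (fun j => P j l)]
  rw [h.symm l k]; ring

theorem qf_swap_sum (hn : 1 ≤ n) (h : IsProj P m) (u : Fin n → ℝ) (h1 : ∑ i, u i ^ 2 = 1)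
    (hb : ∀ i, u i ^ 2 ≤ 3 / (n : ℝ)) :
    ∑ k, ∑ l, (qf P (fun j => u (swap k l j)) - qf P u) ^ 2 ≤ 5000 := by
  have hn0 : (0 : ℝ) < n := by exact_mod_cast hn
  have hkl : ∀ k l, (qf P (fun j => u (swap k l j)) - qf P u) ^ 2 ≤
      192 / n * (mv P u k ^ 2 + mv P u l ^ 2) + 4608 / (n : ℝ) ^ 2 := by
    intro k l
    rw [qf_swap h]
    have hd : (u l - u k) ^ 2 ≤ 12 / n := by
      have : (u l - u k) ^ 2 ≤ 2 * u l ^ 2 + 2 * u k ^ 2 := by nlinarith [sq_nonneg (u l + u k)]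
      have := hb k; have := hb l
      have : (12 : ℝ) / n = 4 * (3 / n) := by ring
      linarith
    set t := (u l - u k) ^ 2 with ht
    have ht0 : 0 ≤ t := sq_nonneg _
    have hz : (P k k + P l l - 2 * P k l) ^ 2 ≤ 16 := by
      have a1 := _root_.abs_le.1 (h.abs_le k l)
      have := h.diag_le k; have := h.diag_le l
      have := h.diag_nonneg k; have := h.diag_nonneg l
      nlinarith
    set z := P k k + P l l - 2 * P k l
    have hm : (mv P u k - mv P u l) ^ 2 ≤ 2 * (mv P u k ^ 2 + mv P u l ^ 2) := by
      nlinarith [sq_nonneg (mv P u k + mv P u l)]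
    have e1 : (2 * (u l - u k) * (mv P u k - mv P u l) + t * z) ^ 2 ≤
        8 * t * (mv P u k - mv P u l) ^ 2 + 2 * t ^ 2 * z ^ 2 := by
      rw [ht]
      nlinarith [sq_nonneg (2 * (u l - u k) * (mv P u k - mv P u l) - (u l - u k) ^ 2 * z)]
    have e2 : t * (mv P u k - mv P u l) ^ 2 ≤ 12 / n * (2 * (mv P u k ^ 2 + mv P u l ^ 2)) :=
      mul_le_mul hd hm (sq_nonneg _) (by positivity)
    have e3 : t ^ 2 * z ^ 2 ≤ (12 / n) ^ 2 * 16 :=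
      mul_le_mul (pow_le_pow_left₀ ht0 hd 2) hz (sq_nonneg _) (by positivity)
    have e4 : (12 / (n : ℝ)) ^ 2 * 16 = 2304 / (n : ℝ) ^ 2 := by ring
    have e5 : (4608 : ℝ) / (n : ℝ) ^ 2 = 2 * (2304 / (n : ℝ) ^ 2) := by ring
    have e6 : 192 / (n : ℝ) * (mv P u k ^ 2 + mv P u l ^ 2) =
      8 * (12 / n * (2 * (mv P u k ^ 2 + mv P u l ^ 2))) := by ring
    rw [e5, e6]
    nlinarith
  refine (Finset.sum_le_sum fun k _ => Finset.sum_le_sum fun l _ => hkl k l).trans ?_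
  simp only [Finset.sum_add_distrib, ← Finset.mul_sum, Finset.sum_const, Finset.card_univ,
    Fintype.card_fin, nsmul_eq_mul]
  rw [h.norm_mv]
  have := h.qf_le u
  rw [h1] at this
  have e : 192 / (n : ℝ) * (n * qf P u + n * qf P u) + n * (n * (4608 / (n : ℝ) ^ 2)) =
    384 * qf P u + 4608 := by field_simp; ring
  rw [e]; linarith

theorem qf_var4 (hn : 1 ≤ n) (h : IsProj P m) (a : Fin n → ℝ) (ha : GoodVec a) (μ : ℝ)
    (hμ : favg (fun σ : Perm (Fin n) => qf P fun k => a (σ k)) = μ) :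
    favg (fun σ : Perm (Fin n) => ((qf P fun k => a (σ k)) - μ) ^ 2) ≤ 2500 / n ∧
    favg (fun σ : Perm (Fin n) => ((qf P fun k => a (σ k)) - μ) ^ 4) ≤ 5 * 2500 ^ 2 / (n : ℝ) ^ 2 := by
  have hn0 : (0 : ℝ) < n := by exact_mod_cast hn
  set f : Perm (Fin n) → ℝ := fun σ => qf P fun k => a (σ k) with hf
  have hsw : ∀ σ : Perm (Fin n), ∑ k, ∑ l, (f (σ * swap k l) - f σ) ^ 2 ≤ 5000 := by
    intro σ
    exact qf_swap_sum hn h (fun k => a (σ k))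
      (by rw [sum_perm (fun i => a i ^ 2) σ, ha.sum1]) (fun i => ha.bd _)
  have hv : favg (fun σ => (f σ - μ) ^ 2) ≤ 2500 / n := by
    rw [favg_var f μ hμ, ← hμ]
    refine (poincare n f).trans ?_
    simp only [dform, ← favg_sum]
    have : favg (fun σ => ∑ k, ∑ l, (f (σ * swap k l) - f σ) ^ 2) ≤ 5000 := by
      refine (favg_mono _ (fun _ => 5000) hsw).trans ?_
      rw [favg_const]
    calc _ ≤ 1 / (2 * (n : ℝ)) * 5000 := mul_le_mul_of_nonneg_left this (by positivity)
      _ = _ := by field_simp; norm_num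
  refine ⟨hv, ?_⟩
  set g : Perm (Fin n) → ℝ := fun σ => (f σ - μ) ^ 2 with hg
  have hp := poincare n g
  have hd : ∀ k l, dform g k l ≤
      4 * favg (fun σ => (f (σ * swap k l) - f σ) ^ 2 * (f σ - μ) ^ 2) := by
    intro k l
    have e1 : favg (fun σ => (f (σ * swap k l) - f σ) ^ 2 * (f (σ * swap k l) - μ) ^ 2) =
        favg (fun σ => (f (σ * swap k l) - f σ) ^ 2 * (f σ - μ) ^ 2) := by
      rw [← favg_equiv (Equiv.mulRight (swap k l))
        (fun σ => (f (σ * swap k l) - f σ) ^ 2 * (f σ - μ) ^ 2)]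
      congr 1; ext σ
      simp only [Equiv.coe_mulRight, Equiv.mul_swap_mul_self]
      ring
    have e2 : dform g k l ≤ favg (fun σ => 2 * ((f (σ * swap k l) - f σ) ^ 2 * (f (σ * swap k l) - μ) ^ 2)
        + 2 * ((f (σ * swap k l) - f σ) ^ 2 * (f σ - μ) ^ 2)) := by
      refine favg_mono _ _ fun σ => ?_
      simp only [hg]
      have : ∀ x y : ℝ, (x ^ 2 - y ^ 2) ^ 2 ≤ 2 * ((x - y) ^ 2 * x ^ 2) + 2 * ((x - y) ^ 2 * y ^ 2) := by
        intro x y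
        have h0 : 0 ≤ ((x - y) * (x - y)) ^ 2 := sq_nonneg _
        nlinarith
      have := this (f (σ * swap k l) - μ) (f σ - μ)
      simpa using this
    rw [favg_add, favg_mul_left, favg_mul_left, e1] at e2
    linarith
  have hs : ∑ k, ∑ l, dform g k l ≤ 4 * (5000 * favg g) := by
    refine (Finset.sum_le_sum fun k _ => Finset.sum_le_sum fun l _ => hd k l).trans ?_
    simp only [← Finset.mul_sum, ← favg_sum]
    refine mul_le_mul_of_nonneg_left ?_ (by norm_num)
    rw [← favg_mul_left]
    refine favg_mono _ _ fun σ => ?_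
    simp only [← Finset.sum_mul]
    exact mul_le_mul_of_nonneg_right (hsw σ) (sq_nonneg _)
  have hg4 : (fun σ => (f σ - μ) ^ 4) = fun σ => g σ ^ 2 := by ext σ; simp only [hg]; ring
  have hg0 : 0 ≤ favg g := favg_nonneg _ fun _ => sq_nonneg _
  rw [hg4]
  have h1 : 1 / (2 * (n : ℝ)) * ∑ k, ∑ l, dform g k l ≤ 4 * (2500 / n) * (2500 / n) := by
    calc _ ≤ 1 / (2 * (n : ℝ)) * (4 * (5000 * favg g)) :=
          mul_le_mul_of_nonneg_left hs (by positivity)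
      _ = 4 * (2500 / n) * favg g := by field_simp; ring
      _ ≤ _ := mul_le_mul_of_nonneg_left hv (by positivity)
  have h2 : (favg g) ^ 2 ≤ (2500 / n) ^ 2 := pow_le_pow_left₀ hg0 hv 2
  have h3 : 5 * 2500 ^ 2 / (n : ℝ) ^ 2 = 4 * (2500 / n) * (2500 / n) + (2500 / n) ^ 2 := by
    field_simp; norm_num
  rw [h3]; linarith
end

open Equiv

/-- Bilinear form. -/
def bf {n : ℕ} (P : Fin n → Fin n → ℝ) (u v : Fin n → ℝ) : ℝ := ∑ k, ∑ l, P k l * (u k * v l)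

/-- Rank one downdate of a projection. -/
noncomputable def pstep {n : ℕ} (P : Fin n → Fin n → ℝ) (w : Fin n → ℝ) (k l : Fin n) : ℝ :=
  P k l - mv P w k * mv P w l / qf P w

theorem bf_self {n : ℕ} (P : Fin n → Fin n → ℝ) (u : Fin n → ℝ) : bf P u u = qf P u := rfl

section
variable {n : ℕ} {P : Fin n → Fin n → ℝ} {m : ℝ}

theorem bf_eq_left (P : Fin n → Fin n → ℝ) (u v : Fin n → ℝ) : bf P u v = ∑ k, u k * mv P v k := by
  simp only [bf, mv, Finset.mul_sum]
  refine Finset.sum_congr rfl fun k _ => Finset.sum_congr rfl fun l _ => ?_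
  ring

theorem IsProj.bf_eq_right (h : IsProj P m) (u v : Fin n → ℝ) : bf P u v = ∑ k, mv P u k * v k := by
  rw [bf_eq_left, h.mv_adj]

theorem IsProj.sum_mv (h : IsProj P m) (w : Fin n → ℝ) : ∑ k, mv P w k = 0 := by
  have := h.mv_adj (fun _ => 1) w
  simp only [one_mul] at this
  rw [this]
  simp [mv, h.row]

theorem IsProj.pstep (h : IsProj P m) (w : Fin n → ℝ) (hw : qf P w ≠ 0) :
    IsProj (pstep P w) (m - 1) := by
  have hx : ∀ k, ∑ j, P k j * mv P w j = mv P w k := fun k => h.mv_mv w k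
  have hx' : ∀ l, ∑ j, mv P w j * P j l = mv P w l := fun l => by
    rw [← hx l]; exact Finset.sum_congr rfl fun j _ => by rw [h.symm j l]; ring
  have hn := h.norm_mv w
  refine ⟨fun k l => ?_, fun k l => ?_, fun k => ?_, ?_⟩
  · simp only [_root_.pstep, h.symm k l]; ring
  · simp only [_root_.pstep]
    set q := qf P w
    have : ∀ j, (P k j - mv P w k * mv P w j / q) * (P j l - mv P w j * mv P w l / q) =
      P k j * P j l - (mv P w l / q) * (P k j * mv P w j) - (mv P w k / q) * (mv P w j * P j l)
      + (mv P w k * mv P w l / q ^ 2) * mv P w j ^ 2 := fun j => by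
        field_simp
        ring
    simp only [this, Finset.sum_add_distrib, Finset.sum_sub_distrib, ← Finset.mul_sum, hx, hx',
      h.idem, hn]
    field_simp
    ring
  · simp only [_root_.pstep, Finset.sum_sub_distrib, h.row, ← Finset.sum_div, ← Finset.mul_sum, h.sum_mv]
    simp
  · simp only [_root_.pstep, Finset.sum_sub_distrib, ← Finset.sum_div, h.tr, ← sq, hn]
    rw [div_self hw]

theorem IsProj.bf_pstep (h : IsProj P m) (w u v : Fin n → ℝ) :
    bf (_root_.pstep P w) u v = bf P u v - bf P u w * bf P w v / qf P w := by
  rw [bf_eq_left P u w, h.bf_eq_right w v]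
  simp only [bf, _root_.pstep, Finset.sum_mul_sum, Finset.sum_div, ← Finset.sum_sub_distrib]
  refine Finset.sum_congr rfl fun k _ => Finset.sum_congr rfl fun l _ => ?_
  ring

theorem det_schur {k : ℕ} (M : Matrix (Fin (k + 1)) (Fin (k + 1)) ℝ) (h0 : M 0 0 ≠ 0) :
    M.det = M 0 0 * (Matrix.of fun i j : Fin k =>
      M i.succ j.succ - M i.succ 0 * M 0 j.succ / M 0 0).det := by
  set B : Matrix (Fin (k + 1)) (Fin (k + 1)) ℝ := Matrix.of fun i j =>
    if i = 0 then M 0 j else M i j - M i 0 / M 0 0 * M 0 j with hB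
  have h1 : M.det = B.det := by
    refine Matrix.det_eq_of_forall_row_eq_smul_add_const
      (fun i => if i = 0 then 0 else M i 0 / M 0 0) 0 (by simp) ?_
    intro i j
    by_cases hi : i = 0
    · subst hi; simp [hB]
    · simp [hB, hi]
  rw [h1, Matrix.det_succ_column_zero, Fin.sum_univ_succ]
  have h2 : ∀ i : Fin k, B i.succ 0 = 0 := by
    intro i; simp [hB, h0]
  simp only [h2]
  have h3 : B 0 0 = M 0 0 := by simp [hB]
  simp only [h3, Fin.val_zero, pow_zero, one_mul, mul_zero, zero_mul, Finset.sum_const_zero, add_zero]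
  congr 2
  ext i j
  simp [hB]
  ring

/-- Gram matrix. -/
def gram {n k : ℕ} (P : Fin n → Fin n → ℝ) (us : Fin k → Fin n → ℝ) : Matrix (Fin k) (Fin k) ℝ :=
  Matrix.of fun i j => bf P (us i) (us j)

theorem IsProj.gram_succ (h : IsProj P m) {k : ℕ} (us : Fin (k + 1) → Fin n → ℝ)
    (h0 : qf P (us 0) ≠ 0) :
    (gram P us).det = qf P (us 0) * (gram (_root_.pstep P (us 0)) (fun i => us i.succ)).det := by
  rw [det_schur (gram P us) h0]
  simp only [gram, Matrix.of_apply, bf_self, h.bf_pstep]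

theorem IsProj.mv_zero (h : IsProj P m) (u : Fin n → ℝ) (h0 : qf P u = 0) (k : Fin n) :
    mv P u k = 0 := by
  rw [← h.norm_mv, Finset.sum_eq_zero_iff_of_nonneg fun _ _ => sq_nonneg _] at h0
  exact pow_eq_zero_iff (two_ne_zero) |>.1 (h0 k (Finset.mem_univ k))

theorem IsProj.gram_zero (h : IsProj P m) {k : ℕ} (us : Fin (k + 1) → Fin n → ℝ)
    (h0 : qf P (us 0) = 0) : (gram P us).det = 0 := by
  refine Matrix.det_eq_zero_of_row_eq_zero 0 fun j => ?_
  simp only [gram, Matrix.of_apply, h.bf_eq_right, h.mv_zero _ h0, zero_mul, Finset.sum_const_zero]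

theorem qf_kd (P : Fin n → Fin n → ℝ) (i : Fin n) : qf P (kd i) = P i i := by
  simp [qf, kd]

/-- One-step update with control of the sum of squared diagonal entries.
`c` stands for `(n-1)/m`, `X = c q - 1`. -/
theorem IsProj.next (h : IsProj P m) (hm : 0 < m) (u : Fin n → ℝ) (c : ℝ) (hc : 0 < c) :
    ∃ P' : Fin n → Fin n → ℝ, IsProj P' (m - 1) ∧ (qf P u ≠ 0 → P' = _root_.pstep P u) ∧
      ∑ k, P' k k ^ 2 ≤ ∑ k, P k k ^ 2 - 2 * c * ∑ k, P k k * mv P u k ^ 2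
        + 2 * |c * qf P u - 1| + 4 * c ^ 2 * ∑ k, mv P u k ^ 4 + 4 * (c * qf P u - 1) ^ 2 := by
  by_cases h0 : qf P u = 0
  · have : ∃ i, P i i ≠ 0 := by
      by_contra hcon
      push Not at hcon
      have := h.tr
      simp [hcon] at this
      linarith
    obtain ⟨i, hi⟩ := this
    have hp := h.pstep (kd i) (by rwa [qf_kd])
    refine ⟨_root_.pstep P (kd i), hp, fun h' => absurd h0 h', ?_⟩
    simp only [h.mv_zero u h0, h0]
    have : ∑ k, _root_.pstep P (kd i) k k ^ 2 ≤ ∑ k, P k k ^ 2 := by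
      refine Finset.sum_le_sum fun k _ => pow_le_pow_left₀ (hp.diag_nonneg k) ?_ 2
      simp only [_root_.pstep]
      have := div_nonneg (mul_self_nonneg (mv P (kd i) k)) (h.qf_nonneg (kd i))
      linarith
    norm_num
    linarith
  · refine ⟨_root_.pstep P u, h.pstep u h0, fun _ => rfl, ?_⟩
    have hq : 0 < qf P u := lt_of_le_of_ne (h.qf_nonneg u) (Ne.symm h0)
    have hn := h.norm_mv u
    set q := qf P u with hqd
    set x := mv P u
    set X := c * q - 1 with hX
    set S := ∑ k, P k k * x k ^ 2 with hS
    set F := ∑ k, x k ^ 4 with hF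
    have hS0 : 0 ≤ S := Finset.sum_nonneg fun k _ => mul_nonneg (h.diag_nonneg k) (sq_nonneg _)
    have hSq : S ≤ q := by
      rw [← hn]
      exact Finset.sum_le_sum fun k _ => by nlinarith [h.diag_le k, sq_nonneg (x k)]
    have hF0 : 0 ≤ F := Finset.sum_nonneg fun k _ => by positivity
    have hFq : F ≤ q ^ 2 := by
      rw [← hn, sq, Finset.sum_mul]
      refine Finset.sum_le_sum fun k _ => ?_
      have : x k ^ 2 ≤ ∑ j, x j ^ 2 :=
        Finset.single_le_sum (f := fun j => x j ^ 2) (fun j _ => sq_nonneg _) (Finset.mem_univ k)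
      nlinarith [sq_nonneg (x k)]
    have e1 : ∑ k, _root_.pstep P u k k ^ 2 = ∑ k, P k k ^ 2 - 2 * (S / q) + F / q ^ 2 := by
      rw [hS, hF, Finset.sum_div, Finset.sum_div, Finset.mul_sum, ← Finset.sum_sub_distrib,
        ← Finset.sum_add_distrib]
      refine Finset.sum_congr rfl fun k _ => ?_
      rw [show _root_.pstep P u k k = P k k - x k * x k / q from rfl]
      field_simp
      ring
    rw [e1]
    have e2 : c * S - |X| ≤ S / q := by
      have : c * S - S / q = X * (S / q) := by rw [hX]; field_simp
      have h1 : S / q ≤ 1 := (div_le_one hq).2 hSq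
      have h2 : 0 ≤ S / q := div_nonneg hS0 hq.le
      have : X * (S / q) ≤ |X| := by
        calc X * (S / q) ≤ |X| * (S / q) := mul_le_mul_of_nonneg_right (le_abs_self _) h2
          _ ≤ |X| * 1 := mul_le_mul_of_nonneg_left h1 (abs_nonneg _)
          _ = |X| := mul_one _
      linarith
    have e3 : F / q ^ 2 ≤ 4 * c ^ 2 * F + 4 * X ^ 2 := by
      by_cases hx : 1 / 2 ≤ c * q
      · have : F / q ^ 2 ≤ 4 * c ^ 2 * F := by
          rw [div_le_iff₀ (by positivity)]
          have : 1 ≤ 4 * (c * q) ^ 2 := by nlinarith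
          nlinarith
        linarith [sq_nonneg X]
      · have h1 : F / q ^ 2 ≤ 1 := (div_le_one (by positivity)).2 hFq
        have h2 : 1 ≤ 4 * X ^ 2 := by
          push Not at hx
          have : X < -(1 / 2) := by rw [hX]; linarith
          nlinarith
        have : 0 ≤ 4 * c ^ 2 * F := by positivity
        linarith
    linarith
end

open Equiv

/-- deviation of the diagonal -/
noncomputable def dev {n : ℕ} (P : Fin n → Fin n → ℝ) (m : ℝ) : ℝ := ∑ k, P k k ^ 2 - m ^ 2 / n

section
variable {n : ℕ} {P : Fin n → Fin n → ℝ} {m : ℝ}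

/-- normalized quadratic form -/
noncomputable def xx (P : Fin n → Fin n → ℝ) (m : ℝ) (a : Fin n → ℝ) (σ : Perm (Fin n)) : ℝ :=
  (((n : ℝ) - 1) / m) * qf P (fun k => a (σ k)) - 1

theorem IsProj.dev_nonneg (h : IsProj P m) (hn : 1 ≤ n) : 0 ≤ dev P m := by
  have := h.cs
  have hn' : (0 : ℝ) < n := by exact_mod_cast hn
  rw [dev, sub_nonneg, div_le_iff₀ hn']
  linarith

theorem q_mean (h : IsProj P m) (hn : 4 ≤ n) (a : Fin n → ℝ) (ha : GoodVec a) :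
    favg (fun σ : Perm (Fin n) => qf P fun k => a (σ k)) = m / ((n : ℝ) - 1) := by
  rw [qf_mean (by omega) a ha.sum0 ha.sum1 P h.row, h.tr]

theorem xx_mean (h : IsProj P m) (hn : 4 ≤ n) (hm : 0 < m) (a : Fin n → ℝ) (ha : GoodVec a) :
    favg (xx P m a) = 0 := by
  have hn' : (4 : ℝ) ≤ n := by exact_mod_cast hn
  have h1 : (n : ℝ) - 1 ≠ 0 := by linarith
  show favg (fun σ : Perm (Fin n) => (((n : ℝ) - 1) / m) * qf P (fun k => a (σ k)) - 1) = 0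
  rw [favg_sub, favg_mul_left, q_mean h hn a ha, favg_const]
  field_simp
  norm_num

theorem c_le {δ : ℝ} (hδ : 0 < δ) (hn : 4 ≤ n) (hm : δ * n ≤ m) :
    0 < m ∧ 0 < ((n : ℝ) - 1) / m ∧ ((n : ℝ) - 1) / m ≤ 1 / δ := by
  have hn' : (4 : ℝ) ≤ n := by exact_mod_cast hn
  have hm0 : 0 < m := lt_of_lt_of_le (by positivity) hm
  refine ⟨hm0, div_pos (by linarith) hm0, ?_⟩
  rw [div_le_div_iff₀ hm0 hδ]
  nlinarith

theorem xx_moments {δ : ℝ} (hδ : 0 < δ) (h : IsProj P m) (hn : 4 ≤ n) (hm : δ * n ≤ m)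
    (a : Fin n → ℝ) (ha : GoodVec a) :
    favg (fun σ => xx P m a σ ^ 2) ≤ (1 / δ) ^ 2 * (2500 / n) ∧
    favg (fun σ => xx P m a σ ^ 4) ≤ (1 / δ) ^ 4 * (5 * 2500 ^ 2 / (n : ℝ) ^ 2) := by
  obtain ⟨hm0, hc0, hc⟩ := c_le hδ hn hm
  have hn' : (4 : ℝ) ≤ n := by exact_mod_cast hn
  have hn1 : (n : ℝ) - 1 ≠ 0 := by linarith
  obtain ⟨h2, h4⟩ := qf_var4 (by omega) h a ha _ (q_mean h hn a ha)
  set c := ((n : ℝ) - 1) / m with hcd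
  have e : ∀ σ, xx P m a σ = c * (qf P (fun k => a (σ k)) - m / ((n : ℝ) - 1)) := by
    intro σ
    rw [xx, ← hcd, mul_sub, hcd]
    congr 1
    field_simp
  simp only [e, mul_pow, favg_mul_left]
  constructor
  · exact mul_le_mul (pow_le_pow_left₀ hc0.le hc 2) h2 (favg_nonneg _ fun _ => by positivity)
      (by positivity)
  · exact mul_le_mul (pow_le_pow_left₀ hc0.le hc 4) h4
      (favg_nonneg _ fun _ => by positivity) (by positivity)

/-- limiting one step variance -/
noncomputable def vv (n : ℕ) (m : ℝ) : ℝ := 2 * ((n : ℝ) - 1 - m) / (m * (n + 1))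

theorem vv_nonneg {δ : ℝ} (hδ : 0 < δ) (hn : 4 ≤ n) (hm : δ * n ≤ m) (hm1 : m ≤ n - 1) :
    0 ≤ vv n m := by
  obtain ⟨hm0, hc0, hc⟩ := c_le hδ hn hm
  exact div_nonneg (by linarith) (by positivity)

theorem vv_le {δ : ℝ} (hδ : 0 < δ) (hn : 4 ≤ n) (hm : δ * n ≤ m) :
    vv n m * n ≤ 2 / δ := by
  obtain ⟨hm0, hc0, hc⟩ := c_le hδ hn hm
  have hn' : (4 : ℝ) ≤ n := by exact_mod_cast hn
  rw [vv, div_mul_eq_mul_div, div_le_div_iff₀ (by positivity) hδ]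
  have h1 : ((n : ℝ) - 1 - m) * n ≤ n * (n + 1) := by nlinarith
  have h2 : 0 ≤ (n + 1) * (m - δ * n) := mul_nonneg (by linarith) (by linarith)
  nlinarith

theorem xx_var {δ : ℝ} (hδ : 0 < δ) (h : IsProj P m) (hn : 4 ≤ n) (hm : δ * n ≤ m)
    (hm1 : m ≤ n - 1) (a : Fin n → ℝ) (ha : GoodVec a) :
    |favg (fun σ => xx P m a σ ^ 2) - vv n m| ≤
      522 / (n : ℝ) ^ 2 * ((1 / δ) ^ 2 * dev P m + 2 / δ) := by
  obtain ⟨hm0, hc0, hc⟩ := c_le hδ hn hm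
  have hn' : (4 : ℝ) ≤ n := by exact_mod_cast hn
  have hn1 : (n : ℝ) - 1 ≠ 0 := by linarith
  obtain ⟨γ, η, hγ, hη, hrel, hA⟩ := qf_sq_mean hn a ha.sum0 ha.sum1 _ ha.bd
  have hP := hA P h.symm h.row
  rw [h.tr, h.tr_sq] at hP
  have e1 : favg (fun σ => xx P m a σ ^ 2) =
      (((n : ℝ) - 1) / m) ^ 2 * (γ * (m ^ 2 + 2 * m) + η * ∑ k, P k k ^ 2) - 1 := by
    have h0 := xx_mean h hn hm0 a ha
    have : ∀ σ, xx P m a σ ^ 2 = (((n : ℝ) - 1) / m) ^ 2 * qf P (fun k => a (σ k)) ^ 2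
       - 2 * xx P m a σ - 1 := by
      intro σ; rw [xx]; ring
    simp only [this]
    rw [favg_sub, favg_sub, favg_mul_left, favg_mul_left, favg_const, hP]
    rw [show favg (fun a_1 => xx P m a a_1) = 0 from h0]
    ring
  have hv0 := vv_nonneg hδ hn hm hm1
  have hvn := vv_le hδ hn hm
  have hγe : γ = (1 - η * (((n : ℝ) - 1) ^ 2 / n)) / ((n : ℝ) ^ 2 - 1) := by
    rw [eq_div_iff (by nlinarith)]; exact hrel
  have hsq : (n : ℝ) ^ 2 - 1 = (n - 1) * (n + 1) := by ring
  have e2 : favg (fun σ => xx P m a σ ^ 2) - vv n m =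
      η * ((((n : ℝ) - 1) / m) ^ 2 * dev P m - vv n m * (((n : ℝ) - 1) ^ 2 / n)) := by
    rw [e1, hγe, vv, dev, hsq]
    field_simp
    ring
  rw [e2, abs_mul]
  have hη' : |η| ≤ 522 / (n : ℝ) ^ 2 := by
    refine hη.trans (le_of_eq ?_)
    field_simp; norm_num
  have hd := h.dev_nonneg (by omega : 1 ≤ n)
  refine mul_le_mul hη' ?_ (abs_nonneg _) (by positivity)
  have t1 : (((n : ℝ) - 1) / m) ^ 2 * dev P m ≤ (1 / δ) ^ 2 * dev P m :=
    mul_le_mul_of_nonneg_right (pow_le_pow_left₀ hc0.le hc 2) hd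
  have t1' : 0 ≤ (((n : ℝ) - 1) / m) ^ 2 * dev P m := by positivity
  have t2 : vv n m * (((n : ℝ) - 1) ^ 2 / n) ≤ vv n m * n := by
    refine mul_le_mul_of_nonneg_left ?_ hv0
    rw [div_le_iff₀ (by linarith)]
    nlinarith
  have t2' : 0 ≤ vv n m * (((n : ℝ) - 1) ^ 2 / n) := by positivity
  rw [abs_le]
  have : 0 ≤ (1 / δ) ^ 2 * dev P m := by positivity
  constructor <;> linarith

theorem mv_sq_eq (P : Fin n → Fin n → ℝ) (u : Fin n → ℝ) (k : Fin n) :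
    mv P u k ^ 2 = qf (fun i j => P k i * P k j) u := by
  rw [mv, sq, Finset.sum_mul_sum, qf]
  refine Finset.sum_congr rfl fun i _ => Finset.sum_congr rfl fun j _ => by ring

theorem mv2_mean (h : IsProj P m) (hn : 4 ≤ n) (a : Fin n → ℝ) (ha : GoodVec a) (k : Fin n) :
    favg (fun σ : Perm (Fin n) => mv P (fun i => a (σ i)) k ^ 2) = P k k / ((n : ℝ) - 1) := by
  simp only [mv_sq_eq]
  rw [qf_mean (by omega) a ha.sum0 ha.sum1 _ fun i => by
    rw [← Finset.mul_sum, h.row, mul_zero]]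
  congr 1
  rw [← h.diag_eq k]
  exact Finset.sum_congr rfl fun i _ => by ring

theorem mv4_mean (h : IsProj P m) (hn : 4 ≤ n) (a : Fin n → ℝ) (ha : GoodVec a) (k : Fin n) :
    favg (fun σ : Perm (Fin n) => mv P (fun i => a (σ i)) k ^ 4) ≤ 630 / (n : ℝ) ^ 2 * P k k ^ 2 := by
  have hn' : (4 : ℝ) ≤ n := by exact_mod_cast hn
  obtain ⟨γ, η, hγ, hη, hrel, hA⟩ := qf_sq_mean hn a ha.sum0 ha.sum1 _ ha.bd
  have hP := hA (fun i j => P k i * P k j) (fun i j => mul_comm _ _) fun i => by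
    rw [← Finset.mul_sum, h.row, mul_zero]
  have e0 : ∀ σ : Perm (Fin n), mv P (fun i => a (σ i)) k ^ 4 =
     qf (fun i j => P k i * P k j) (fun i => a (σ i)) ^ 2 := by
    intro σ; rw [← mv_sq_eq]; ring
  simp only [e0]
  rw [hP]
  have e1 : ∑ i, P k i * P k i = P k k := by
    rw [← h.diag_eq k]
    exact Finset.sum_congr rfl fun i _ => by ring
  have e2 : ∑ i, ∑ j, (P k i * P k j) ^ 2 = P k k ^ 2 := by
    rw [← h.diag_eq k, sq, Finset.sum_mul_sum]
    exact Finset.sum_congr rfl fun i _ => Finset.sum_congr rfl fun i _ => by ring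
  have e3 : ∑ i, (P k i * P k i) ^ 2 ≤ P k k ^ 2 := by
    rw [← e2]
    refine Finset.sum_le_sum fun i _ => ?_
    exact Finset.single_le_sum (f := fun j => (P k i * P k j) ^ 2) (fun j _ => sq_nonneg _)
      (Finset.mem_univ i)
  have e3' : 0 ≤ ∑ i, (P k i * P k i) ^ 2 := Finset.sum_nonneg fun _ _ => sq_nonneg _
  rw [e1, e2]
  have g1 : γ * (P k k ^ 2 + 2 * P k k ^ 2) ≤ 36 / (n : ℝ) ^ 2 * (P k k ^ 2 + 2 * P k k ^ 2) := by
    refine mul_le_mul_of_nonneg_right ((le_abs_self _).trans (hγ.trans (le_of_eq ?_))) (by positivity)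
    field_simp; norm_num
  have g2 : η * ∑ i, (P k i * P k i) ^ 2 ≤ 522 / (n : ℝ) ^ 2 * P k k ^ 2 := by
    refine mul_le_mul ((le_abs_self _).trans (hη.trans (le_of_eq ?_))) e3 e3' (by positivity)
    field_simp; norm_num
  calc _ ≤ _ := add_le_add g1 g2
    _ = _ := by ring

theorem xx_abs {δ : ℝ} (hδ : 0 < δ) (h : IsProj P m) (hn : 4 ≤ n) (hm : δ * n ≤ m)
    (a : Fin n → ℝ) (ha : GoodVec a) :
    favg (fun σ => |xx P m a σ|) ≤ (1 + (1 / δ) ^ 2 * 2500) / √n := by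
  have hn' : (4 : ℝ) ≤ n := by exact_mod_cast hn
  have hs : 0 < √(n : ℝ) := Real.sqrt_pos.2 (by linarith)
  have hss : √(n : ℝ) * √(n : ℝ) = n := Real.mul_self_sqrt (by linarith)
  have h2 := (xx_moments hδ h hn hm a ha).1
  calc favg (fun σ => |xx P m a σ|) ≤ favg (fun σ => 1 / √n + √n * xx P m a σ ^ 2) := by
        refine favg_mono _ _ fun σ => ?_
        have : 1 / √(n : ℝ) + √n * xx P m a σ ^ 2 - |xx P m a σ| =
          ((1 - √(n : ℝ) * |xx P m a σ|) ^ 2 + √n * |xx P m a σ|) / √n := by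
          rw [← sq_abs]; field_simp; ring
        have h3 : 0 ≤ ((1 - √(n : ℝ) * |xx P m a σ|) ^ 2 + √n * |xx P m a σ|) / √n := by positivity
        linarith
    _ = 1 / √n + √n * favg (fun σ => xx P m a σ ^ 2) := by
        rw [favg_add, favg_const, favg_mul_left]
    _ ≤ 1 / √n + √n * ((1 / δ) ^ 2 * (2500 / n)) := by gcongr
    _ = _ := by
        rw [show √(n : ℝ) * ((1 / δ) ^ 2 * (2500 / n)) = (1 / δ) ^ 2 * 2500 * (√(n : ℝ) / n) by ring,
          Real.sqrt_div_self']
        ring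

theorem xx_abs3 {δ : ℝ} (hδ : 0 < δ) (h : IsProj P m) (hn : 4 ≤ n) (hm : δ * n ≤ m)
    (a : Fin n → ℝ) (ha : GoodVec a) :
    favg (fun σ => |xx P m a σ| ^ 3) ≤
      ((1 / δ) ^ 2 * 2500 + (1 / δ) ^ 4 * (5 * 2500 ^ 2)) / (n * √n) := by
  have hn' : (4 : ℝ) ≤ n := by exact_mod_cast hn
  have hs : 0 < √(n : ℝ) := Real.sqrt_pos.2 (by linarith)
  have hss : √(n : ℝ) * √(n : ℝ) = n := Real.mul_self_sqrt (by linarith)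
  obtain ⟨h2, h4⟩ := xx_moments hδ h hn hm a ha
  calc favg (fun σ => |xx P m a σ| ^ 3)
      ≤ favg (fun σ => 1 / √n * xx P m a σ ^ 2 + √n * xx P m a σ ^ 4) := by
        refine favg_mono _ _ fun σ => ?_
        have : 1 / √n * xx P m a σ ^ 2 + √n * xx P m a σ ^ 4 - |xx P m a σ| ^ 3 =
          |xx P m a σ| ^ 2 * ((1 - √(n : ℝ) * |xx P m a σ|) ^ 2 + √n * |xx P m a σ|) / √n := by
          rw [show xx P m a σ ^ 4 = (xx P m a σ ^ 2) ^ 2 by ring, ← sq_abs]; field_simp; ring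
        have h3 : 0 ≤ |xx P m a σ| ^ 2 *
          ((1 - √(n : ℝ) * |xx P m a σ|) ^ 2 + √n * |xx P m a σ|) / √n := by positivity
        linarith
    _ = 1 / √n * favg (fun σ => xx P m a σ ^ 2) + √n * favg (fun σ => xx P m a σ ^ 4) := by
        rw [favg_add, favg_mul_left, favg_mul_left]
    _ ≤ 1 / √n * ((1 / δ) ^ 2 * (2500 / n)) + √n * ((1 / δ) ^ 4 * (5 * 2500 ^ 2 / (n : ℝ) ^ 2)) := by
        gcongr
    _ = _ := by
        have : (n : ℝ) ^ 2 = n * (√n * √n) := by rw [hss]; ring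
        rw [this]; field_simp

theorem next_avg {δ : ℝ} (hδ : 0 < δ) (h : IsProj P m) (hn : 4 ≤ n) (hm : δ * n ≤ m)
    (hm1 : m ≤ n - 1) (a : Fin n → ℝ) (ha : GoodVec a) :
    ∃ P' : Perm (Fin n) → Fin n → Fin n → ℝ, (∀ σ, IsProj (P' σ) (m - 1)) ∧
      (∀ σ, qf P (fun k => a (σ k)) ≠ 0 → P' σ = pstep P (fun k => a (σ k))) ∧
      favg (fun σ => dev (P' σ) (m - 1)) ≤ dev P m +
        (2 * (1 + (1 / δ) ^ 2 * 2500) + (1 / δ) ^ 2 * 2520 + (1 / δ) ^ 2 * 10000) / √n := by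
  obtain ⟨hm0, hc0, hc⟩ := c_le hδ hn hm
  have hn' : (4 : ℝ) ≤ n := by exact_mod_cast hn
  have hn1 : (n : ℝ) - 1 ≠ 0 := by linarith
  set c := ((n : ℝ) - 1) / m with hcd
  choose P' hP1 hP2 hP3 using fun σ : Perm (Fin n) => h.next hm0 (fun k => a (σ k)) c hc0
  refine ⟨P', hP1, hP2, ?_⟩
  have hs : 0 < √(n : ℝ) := Real.sqrt_pos.2 (by linarith)
  have hs1 : 1 ≤ √(n : ℝ) := Real.one_le_sqrt.2 (by linarith)
  have hss : √(n : ℝ) * √(n : ℝ) = n := Real.mul_self_sqrt (by linarith)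
  set R := ∑ k, P k k ^ 2 with hR
  have a1 : favg (fun σ : Perm (Fin n) => ∑ k, P k k * mv P (fun i => a (σ i)) k ^ 2) =
      R / ((n : ℝ) - 1) := by
    rw [favg_sum, hR, Finset.sum_div]
    refine Finset.sum_congr rfl fun k _ => ?_
    rw [favg_mul_left, mv2_mean h hn a ha]; ring
  have a2 : favg (fun σ : Perm (Fin n) => ∑ k, mv P (fun i => a (σ i)) k ^ 4) ≤ 630 / (n : ℝ) := by
    rw [favg_sum]
    calc _ ≤ ∑ k, 630 / (n : ℝ) ^ 2 * P k k ^ 2 :=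
          Finset.sum_le_sum fun k _ => mv4_mean h hn a ha k
      _ = 630 / (n : ℝ) ^ 2 * R := by rw [← Finset.mul_sum]
      _ ≤ 630 / (n : ℝ) ^ 2 * n := by
          gcongr; exact h.diag_sq_le.trans h.m_le
      _ = _ := by field_simp
  have a3 := xx_abs hδ h hn hm a ha
  have a4 := (xx_moments hδ h hn hm a ha).1
  have key : favg (fun σ => dev (P' σ) (m - 1)) ≤
      favg (fun σ : Perm (Fin n) => (R - (m - 1) ^ 2 / n)
        - (2 * c) * (∑ k, P k k * mv P (fun i => a (σ i)) k ^ 2)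
        + 2 * |xx P m a σ| + (4 * c ^ 2) * (∑ k, mv P (fun i => a (σ i)) k ^ 4)
        + 4 * xx P m a σ ^ 2) := by
    refine favg_mono _ _ fun σ => ?_
    have := hP3 σ
    rw [dev]
    have e : c * qf P (fun k => a (σ k)) - 1 = xx P m a σ := rfl
    rw [e] at this
    linarith
  refine key.trans ?_
  rw [favg_add, favg_add, favg_add, favg_sub, favg_mul_left, favg_mul_left, favg_mul_left,
    favg_mul_left, favg_const, a1]
  have hcs := h.cs
  have b1 : 2 * m / n ≤ 2 * c * (R / ((n : ℝ) - 1)) := by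
    have : 2 * c * (R / ((n : ℝ) - 1)) = 2 * R / m := by rw [hcd]; field_simp
    rw [this, div_le_div_iff₀ (by linarith) hm0]
    nlinarith
  have b2 : (4 * c ^ 2) * favg (fun σ : Perm (Fin n) => ∑ k, mv P (fun i => a (σ i)) k ^ 4)
      ≤ (1 / δ) ^ 2 * 2520 / √n := by
    calc _ ≤ (4 * (1 / δ) ^ 2) * (630 / (n : ℝ)) := by
          have : 0 ≤ favg (fun σ : Perm (Fin n) => ∑ k, mv P (fun i => a (σ i)) k ^ 4) :=
            favg_nonneg _ fun _ => Finset.sum_nonneg fun _ _ => by positivity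
          gcongr
      _ = (1 / δ) ^ 2 * 2520 / n := by ring
      _ ≤ _ := by
        gcongr
        nlinarith
  have b3 : 4 * favg (fun σ => xx P m a σ ^ 2) ≤ (1 / δ) ^ 2 * 10000 / √n := by
    calc _ ≤ 4 * ((1 / δ) ^ 2 * (2500 / n)) := by gcongr
      _ = (1 / δ) ^ 2 * 10000 / n := by ring
      _ ≤ _ := by
        gcongr
        nlinarith
  have b4 : (m - 1) ^ 2 / n = m ^ 2 / n - 2 * m / n + 1 / n := by field_simp; ring
  have b5 : 0 ≤ 1 / (n : ℝ) := by positivity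
  rw [b4, add_div, add_div, dev, mul_div_assoc 2 (1 + (1 / δ) ^ 2 * 2500)]
  linarith
end

open Equiv

/-- `x ↦ x^{it}`, with value `0` at `0`. -/
noncomputable def chi (t x : ℝ) : ℂ :=
  if x = 0 then 0 else Complex.exp ((t * Real.log x : ℝ) * Complex.I)

theorem chi_norm (t x : ℝ) : ‖chi t x‖ ≤ 1 := by
  rw [chi]; split_ifs
  · simp
  · rw [Complex.norm_exp_ofReal_mul_I]

theorem chi_zero (t : ℝ) : chi t 0 = 0 := by simp [chi]
theorem chi_one (t : ℝ) : chi t 1 = 1 := by simp [chi]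

theorem chi_mul (t x y : ℝ) : chi t (x * y) = chi t x * chi t y := by
  by_cases hx : x = 0
  · simp [hx, chi_zero]
  by_cases hy : y = 0
  · simp [hy, chi_zero]
  simp only [chi, hx, hy, mul_eq_zero, or_self, if_false]
  rw [← Complex.exp_add, Real.log_mul hx hy]
  congr 1; push_cast; ring

/-- the quadratic coefficient -/
noncomputable def cc (t : ℝ) : ℂ := (Complex.I * t + t ^ 2) / 2

theorem chi_taylor (t : ℝ) : ∃ C : ℝ, 0 ≤ C ∧ ∀ x : ℝ, -1 ≤ x →
    ‖chi t (1 + x) - (1 + Complex.I * t * x - cc t * x ^ 2)‖ ≤ C * |x| ^ 3 := by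
  refine ⟨8 * |t| ^ 3 * Real.exp |t| + 2 * |t| + 5 * t ^ 2 + 16 + 4 * |t| + 2 * ‖cc t‖,
    by positivity, fun x hx => ?_⟩
  have hI : ‖Complex.I * t‖ = |t| := by simp
  by_cases h : |x| ≤ 1 / 2
  · have hx1 : 0 < 1 + x := by rw [abs_le] at h; linarith
    rw [chi, if_neg hx1.ne']
    set L := Real.log (1 + x) with hL
    have l1 : |L - x + x ^ 2 / 2| ≤ 2 * |x| ^ 3 := by
      have := Real.abs_log_sub_add_sum_range_le (x := -x) (by rw [abs_neg]; linarith) 2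
      rw [abs_neg] at this
      simp only [Finset.sum_range_succ, Finset.sum_range_zero, sub_neg_eq_add] at this
      norm_num at this
      rw [← hL] at this
      refine le_trans (le_of_eq ?_) (this.trans ?_)
      · congr 1; ring
      · rw [div_le_iff₀ (by linarith)]
        have : 0 ≤ |x| ^ 3 := by positivity
        nlinarith
    have x0 := abs_nonneg x
    have hx3 : |x| ^ 3 ≤ |x| ^ 2 / 2 := by nlinarith [sq_nonneg |x|]
    have hx2 : |x| ^ 2 ≤ |x| / 2 := by nlinarith
    have l2 : |L - x| ≤ 3 / 2 * |x| ^ 2 := by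
      calc |L - x| = |(L - x + x ^ 2 / 2) - x ^ 2 / 2| := by congr 1; ring
        _ ≤ |L - x + x ^ 2 / 2| + |x ^ 2 / 2| := abs_sub _ _
        _ ≤ 2 * |x| ^ 3 + |x| ^ 2 / 2 := by
            gcongr; rw [abs_div, abs_pow, abs_two]
        _ ≤ _ := by linarith
    have l3 : |L| ≤ 2 * |x| := by
      calc |L| = |(L - x) + x| := by congr 1; ring
        _ ≤ |L - x| + |x| := abs_add_le _ _
        _ ≤ _ := by linarith
    set z : ℂ := (t * L : ℝ) * Complex.I with hz
    have hzn : ‖z‖ = |t| * |L| := by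
      rw [hz, norm_mul, Complex.norm_I, mul_one, Complex.norm_real, Real.norm_eq_abs, abs_mul]
    have z1 : ‖z‖ ≤ |t| * (2 * |x|) := by rw [hzn]; gcongr
    have z2 : ‖z‖ ≤ |t| := by
      have := mul_le_mul_of_nonneg_left (show 2 * |x| ≤ 1 by linarith) (abs_nonneg t)
      linarith
    have ex := Complex.norm_exp_sub_sum_le_norm_mul_exp z 3
    have e1 : ‖Complex.exp z - ∑ m ∈ Finset.range 3, z ^ m / (m.factorial : ℂ)‖ ≤
        8 * |t| ^ 3 * Real.exp |t| * |x| ^ 3 := by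
      refine ex.trans ?_
      calc ‖z‖ ^ 3 * Real.exp ‖z‖ ≤ (|t| * (2 * |x|)) ^ 3 * Real.exp |t| := by gcongr
        _ = _ := by ring
    have e2 : (Complex.exp z - (1 + Complex.I * t * x - cc t * x ^ 2)) =
        (Complex.exp z - ∑ m ∈ Finset.range 3, z ^ m / (m.factorial : ℂ)) +
        (Complex.I * t * ((L - x + x ^ 2 / 2 : ℝ) : ℂ) -
          ((t ^ 2 / 2 * ((L - x) * (L + x)) : ℝ) : ℂ)) := by
      simp only [Finset.sum_range_succ, Finset.sum_range_zero]
      simp only [Nat.factorial]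
      rw [hz, cc]
      push_cast
      have : Complex.I ^ 2 = -1 := Complex.I_sq
      linear_combination (((t : ℂ) ^ 2 * L ^ 2 / 2)) * this
    rw [e2]
    have e3 : ‖Complex.I * t * ((L - x + x ^ 2 / 2 : ℝ) : ℂ)‖ ≤ |t| * (2 * |x| ^ 3) := by
      rw [norm_mul, hI, Complex.norm_real, Real.norm_eq_abs]; gcongr
    have e4 : ‖((t ^ 2 / 2 * ((L - x) * (L + x)) : ℝ) : ℂ)‖ ≤ 5 * t ^ 2 * |x| ^ 3 := by
      rw [Complex.norm_real, Real.norm_eq_abs, abs_mul, abs_mul]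
      have : |L + x| ≤ 3 * |x| := (abs_add_le _ _).trans (by linarith)
      have h2 : |t ^ 2 / 2| = t ^ 2 / 2 := abs_of_nonneg (by positivity)
      rw [h2]
      calc t ^ 2 / 2 * (|L - x| * |L + x|) ≤ t ^ 2 / 2 * (3 / 2 * |x| ^ 2 * (3 * |x|)) := by gcongr
        _ = (9 / 4) * t ^ 2 * |x| ^ 3 := by ring
        _ ≤ _ := by gcongr; norm_num
    have := norm_add_le (Complex.exp z - ∑ m ∈ Finset.range 3, z ^ m / (m.factorial : ℂ))
        (Complex.I * t * ((L - x + x ^ 2 / 2 : ℝ) : ℂ) -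
          ((t ^ 2 / 2 * ((L - x) * (L + x)) : ℝ) : ℂ))
    have h5 := norm_sub_le (Complex.I * t * ((L - x + x ^ 2 / 2 : ℝ) : ℂ))
          ((t ^ 2 / 2 * ((L - x) * (L + x)) : ℝ) : ℂ)
    have h6 : 0 ≤ (16 + 4 * |t| + 2 * ‖cc t‖) * |x| ^ 3 := by positivity
    nlinarith
  · push Not at h
    have x0 := abs_nonneg x
    have y1 : |x| ^ 2 ≤ 2 * |x| ^ 3 := by nlinarith [sq_nonneg |x|]
    have y2 : |x| ≤ 4 * |x| ^ 3 := by nlinarith [sq_nonneg |x|]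
    have y3 : 1 ≤ 8 * |x| ^ 3 := by nlinarith [sq_nonneg |x|]
    have n1 := norm_sub_le (chi t (1 + x)) (1 + Complex.I * t * x - cc t * x ^ 2)
    have n2 := norm_sub_le (1 + Complex.I * t * x) (cc t * x ^ 2)
    have n3 := norm_add_le 1 (Complex.I * t * x)
    have n4 : ‖Complex.I * t * x‖ = |t| * |x| := by
      rw [norm_mul, hI, Complex.norm_real, Real.norm_eq_abs]
    have n5 : ‖cc t * x ^ 2‖ = ‖cc t‖ * |x| ^ 2 := by
      rw [norm_mul, norm_pow, Complex.norm_real, Real.norm_eq_abs]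
    have n6 := chi_norm t (1 + x)
    rw [norm_one] at n3
    have m1 := mul_le_mul_of_nonneg_left y2 (abs_nonneg t)
    have m2 := mul_le_mul_of_nonneg_left y1 (norm_nonneg (cc t))
    have h6 : 0 ≤ (8 * |t| ^ 3 * Real.exp |t| + 2 * |t| + 5 * t ^ 2) * |x| ^ 3 := by positivity
    nlinarith

section
variable {n : ℕ} {P : Fin n → Fin n → ℝ} {m : ℝ}

theorem chi_avg {δ : ℝ} (hδ : 0 < δ) (t : ℝ) : ∃ A : ℝ, 0 ≤ A ∧
    ∀ (n : ℕ) (P : Fin n → Fin n → ℝ) (m : ℝ) (a : Fin n → ℝ), IsProj P m → 4 ≤ n → δ * n ≤ m →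
    m ≤ n - 1 → GoodVec a →
    ‖favg (fun σ => chi t (1 + xx P m a σ)) - (1 - cc t * vv n m)‖ ≤
      A * (dev P m / (n : ℝ) ^ 2 + 1 / (n * √n)) := by
  obtain ⟨C, hC, hT⟩ := chi_taylor t
  refine ⟨C * ((1 / δ) ^ 2 * 2500 + (1 / δ) ^ 4 * (5 * 2500 ^ 2)) +
    ‖cc t‖ * (522 * ((1 / δ) ^ 2 + 2 / δ)), by positivity, ?_⟩
  intro n P m a h hn hm hm1 ha
  obtain ⟨hm0, hc0, hc⟩ := c_le hδ hn hm
  have hn' : (4 : ℝ) ≤ n := by exact_mod_cast hn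
  have h3 := xx_abs3 hδ h hn hm a ha
  have hv := xx_var hδ h hn hm hm1 a ha
  have hD := h.dev_nonneg (by omega : 1 ≤ n)
  have hs : 0 < √(n : ℝ) := Real.sqrt_pos.2 (by linarith)
  have hs1 : 1 ≤ √(n : ℝ) := Real.one_le_sqrt.2 (by linarith)
  have hss : √(n : ℝ) * √(n : ℝ) = n := Real.mul_self_sqrt (by linarith)
  have e1 : favg (fun σ => (1 + Complex.I * t * (xx P m a σ : ℂ) - cc t * (xx P m a σ : ℂ) ^ 2)) =
      1 - cc t * (favg (fun σ => xx P m a σ ^ 2) : ℝ) := by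
    rw [favg_sub, favg_add, favg_cmul_left, favg_cmul_left, favg_const, favg_ofReal,
      show favg (fun a_1 => xx P m a a_1) = 0 from xx_mean h hn hm0 a ha]
    rw [← favg_ofReal]
    push_cast
    ring
  have e2 : favg (fun σ => chi t (1 + xx P m a σ)) - (1 - cc t * vv n m) =
      favg (fun σ => chi t (1 + xx P m a σ) -
        (1 + Complex.I * t * (xx P m a σ : ℂ) - cc t * (xx P m a σ : ℂ) ^ 2)) -
      cc t * ((favg (fun σ => xx P m a σ ^ 2) - vv n m : ℝ) : ℂ) := by
    rw [favg_sub, e1]; push_cast; ring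
  rw [e2]
  refine (norm_sub_le _ _).trans ?_
  have b1 : ‖favg (fun σ => chi t (1 + xx P m a σ) -
        (1 + Complex.I * t * (xx P m a σ : ℂ) - cc t * (xx P m a σ : ℂ) ^ 2))‖ ≤
        C * (((1 / δ) ^ 2 * 2500 + (1 / δ) ^ 4 * (5 * 2500 ^ 2)) / (n * √n)) := by
    refine (norm_favg_le _).trans ?_
    calc _ ≤ favg (fun σ => C * |xx P m a σ| ^ 3) := by
          refine favg_mono _ _ fun σ => hT _ ?_
          have : 0 ≤ (((n : ℝ) - 1) / m) * qf P (fun k => a (σ k)) :=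
            mul_nonneg hc0.le (h.qf_nonneg _)
          rw [xx]; linarith
      _ = C * favg (fun σ => |xx P m a σ| ^ 3) := favg_mul_left _ _
      _ ≤ _ := by gcongr
  have b2 : ‖cc t * ((favg (fun σ => xx P m a σ ^ 2) - vv n m : ℝ) : ℂ)‖ ≤
      ‖cc t‖ * (522 * ((1 / δ) ^ 2 + 2 / δ)) * (dev P m / (n : ℝ) ^ 2 + 1 / (n * √n)) := by
    rw [norm_mul, Complex.norm_real, Real.norm_eq_abs, mul_assoc]
    gcongr
    refine hv.trans ?_
    have i1 : 1 / (n : ℝ) ^ 2 ≤ 1 / (n * √n) := by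
      apply one_div_le_one_div_of_le (by positivity)
      nlinarith
    have i2 : 0 ≤ dev P m / (n : ℝ) ^ 2 := by positivity
    have i3 : 0 ≤ 1 / ((n : ℝ) * √n) := by positivity
    have i4 : 522 / (n : ℝ) ^ 2 * ((1 / δ) ^ 2 * dev P m + 2 / δ) =
      522 * ((1 / δ) ^ 2 * (dev P m / (n : ℝ) ^ 2) + 2 / δ * (1 / (n : ℝ) ^ 2)) := by ring
    rw [i4]
    have i5 : 2 / δ * (1 / (n : ℝ) ^ 2) ≤ 2 / δ * (1 / (n * √n)) := by gcongr
    have i6 : 0 ≤ 2 / δ * (dev P m / (n : ℝ) ^ 2) := by positivity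
    have i7 : 0 ≤ (1 / δ) ^ 2 * (1 / ((n : ℝ) * √n)) := by positivity
    nlinarith
  have b3 : 0 ≤ C * ((1 / δ) ^ 2 * 2500 + (1 / δ) ^ 4 * (5 * 2500 ^ 2)) *
    (dev P m / (n : ℝ) ^ 2) := by positivity
  have b4 : C * (((1 / δ) ^ 2 * 2500 + (1 / δ) ^ 4 * (5 * 2500 ^ 2)) / (n * √n)) =
    C * ((1 / δ) ^ 2 * 2500 + (1 / δ) ^ 4 * (5 * 2500 ^ 2)) * (1 / (n * √n)) := by ring
  rw [b4] at b1
  rw [add_mul, mul_add]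
  linarith
end

/-- Mellin type transform of the determinant. -/
noncomputable def psi {n : ℕ} (t : ℝ) (k : ℕ) (P : Fin n → Fin n → ℝ) (a : Fin n → ℝ) : ℂ :=
  favg (fun ω : Fin k → Perm (Fin n) => chi t (gram P (fun i j => a (ω i j))).det)

theorem psi_zero {n : ℕ} (t : ℝ) (P : Fin n → Fin n → ℝ) (a : Fin n → ℝ) : psi t 0 P a = 1 := by
  simp only [psi, Matrix.det_fin_zero, chi_one]
  exact favg_const _

theorem psi_succ {n : ℕ} {m : ℝ} (t : ℝ) (k : ℕ) (P : Fin n → Fin n → ℝ) (h : IsProj P m)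
    (a : Fin n → ℝ) (P' : Perm (Fin n) → Fin n → Fin n → ℝ)
    (hP' : ∀ σ, qf P (fun k => a (σ k)) ≠ 0 → P' σ = pstep P (fun k => a (σ k))) :
    psi t (k + 1) P a = favg (fun σ : Perm (Fin n) => chi t (qf P fun k => a (σ k)) * psi t k (P' σ) a) := by
  rw [psi, ← favg_equiv (Fin.consEquiv (fun _ : Fin (k + 1) => Perm (Fin n))), favg_prod]
  congr 1
  ext1 σ
  rw [psi, ← favg_cmul_left]
  congr 1
  ext1 ω
  by_cases h0 : qf P (fun k => a (σ k)) = 0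
  · rw [h.gram_zero _ (by simpa [Fin.consEquiv] using h0), h0, chi_zero, zero_mul]
  · rw [h.gram_succ _ (by simpa [Fin.consEquiv] using h0), chi_mul, hP' σ h0]
    simp [Fin.consEquiv]

/-- deterministic approximation -/
noncomputable def TT (t : ℝ) (n k : ℕ) (m : ℝ) : ℂ :=
  ∏ i ∈ Finset.range k, (chi t ((m - i) / ((n : ℝ) - 1)) * (1 - cc t * vv n (m - i)))

theorem TT_succ (t : ℝ) (n k : ℕ) (m : ℝ) : TT t n (k + 1) m =
    chi t (m / ((n : ℝ) - 1)) * (1 - cc t * vv n m) * TT t n k (m - 1) := by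
  rw [TT, Finset.prod_range_succ', TT, mul_comm]
  push_cast
  simp only [sub_zero]
  congr 1
  refine Finset.prod_congr rfl fun i _ => ?_
  rw [show m - ((i : ℝ) + 1) = m - 1 - i by ring]

theorem TT_norm {δ : ℝ} (hδ : 0 < δ) (t : ℝ) (n : ℕ) (hn : 4 ≤ n) : ∀ (k : ℕ) (m : ℝ),
    m ≤ n - 1 → δ * n ≤ m - k → ‖TT t n k m‖ ≤ Real.exp (‖cc t‖ * (2 / δ)) := by
  intro k m hm1 hm
  have hn' : (4 : ℝ) ≤ n := by exact_mod_cast hn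
  have hkn : (k : ℝ) ≤ n := by
    have : 0 < δ * n := by positivity
    linarith
  rw [TT, norm_prod]
  calc _ ≤ ∏ i ∈ Finset.range k, Real.exp (‖cc t‖ * (2 / δ) / n) := by
        refine Finset.prod_le_prod (fun i _ => norm_nonneg _) fun i hi => ?_
        have hi' : (i : ℝ) ≤ k := by exact_mod_cast (Finset.mem_range.1 hi).le
        have hmi : δ * n ≤ m - i := by linarith
        have hv := vv_le hδ hn hmi
        have i0 : (0 : ℝ) ≤ i := by positivity
        have hv0 := vv_nonneg hδ hn hmi (by linarith)
        rw [norm_mul]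
        have h1 : ‖1 - cc t * (vv n (m - i) : ℂ)‖ ≤ 1 + ‖cc t‖ * (2 / δ) / n := by
          refine (norm_sub_le _ _).trans ?_
          rw [norm_one, norm_mul, Complex.norm_real, Real.norm_eq_abs, abs_of_nonneg hv0,
            mul_div_assoc]
          gcongr
          rw [le_div_iff₀ (by linarith)]; exact hv
        have h2 := Real.add_one_le_exp (‖cc t‖ * (2 / δ) / n)
        calc _ ≤ 1 * ‖1 - cc t * (vv n (m - i) : ℂ)‖ := by
              gcongr; exact chi_norm _ _
          _ ≤ _ := by linarith
    _ = Real.exp (k * (‖cc t‖ * (2 / δ) / n)) := by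
        rw [Finset.prod_const, Finset.card_range, ← Real.exp_nat_mul]
    _ ≤ _ := by
        apply Real.exp_le_exp.2
        rw [← mul_div_assoc, div_le_iff₀ (by linarith), mul_comm]
        gcongr

theorem psi_bound {δ : ℝ} (hδ : 0 < δ) (t : ℝ) : ∃ K C : ℝ, 0 ≤ K ∧ 0 ≤ C ∧
    ∀ (n : ℕ) (a : Fin n → ℝ), 4 ≤ n → GoodVec a → ∀ (k : ℕ) (P : Fin n → Fin n → ℝ) (m : ℝ),
    IsProj P m → δ * n ≤ m - k → m ≤ n - 1 →
    ‖psi t k P a - TT t n k m‖ ≤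
      K * (k * (dev P m / (n : ℝ) ^ 2) + k * (1 / (n * √n)) + k ^ 2 * (C / ((n : ℝ) ^ 2 * √n))) := by
  obtain ⟨A, hA, hchi⟩ := chi_avg hδ t
  set B := Real.exp (‖cc t‖ * (2 / δ)) with hB
  have hB0 : 0 < B := Real.exp_pos _
  set C := (2 * (1 + (1 / δ) ^ 2 * 2500) + (1 / δ) ^ 2 * 2520 + (1 / δ) ^ 2 * 10000) with hC
  have hC0 : 0 ≤ C := by positivity
  refine ⟨A * B, C, by positivity, hC0, ?_⟩
  intro n a hn ha k
  have hn' : (4 : ℝ) ≤ n := by exact_mod_cast hn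
  have hs : 0 < √(n : ℝ) := Real.sqrt_pos.2 (by linarith)
  induction k with
  | zero => intro P m h _ _; simp [psi_zero, TT]
  | succ k ih =>
    intro P m h hm hm1
    push_cast at hm
    have hk0 : (0 : ℝ) ≤ k := by positivity
    have hmn : δ * n ≤ m := by linarith
    obtain ⟨hm0, hc0, hc⟩ := c_le hδ hn hmn
    obtain ⟨P', hP1, hP2, hP3⟩ := next_avg hδ h hn hmn hm1 a ha
    rw [← hC] at hP3
    rw [psi_succ t k P h a P' hP2, TT_succ]
    have hq : ∀ σ : Perm (Fin n), chi t (qf P fun k => a (σ k)) =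
        chi t (m / ((n : ℝ) - 1)) * chi t (1 + xx P m a σ) := by
      intro σ
      rw [← chi_mul]
      congr 1
      rw [xx]
      have : (n : ℝ) - 1 ≠ 0 := by linarith
      field_simp
      ring
    set T := TT t n k (m - 1) with hT
    have e : favg (fun σ : Perm (Fin n) => chi t (qf P fun k => a (σ k)) * psi t k (P' σ) a) -
        chi t (m / ((n : ℝ) - 1)) * (1 - cc t * vv n m) * T =
        chi t (m / ((n : ℝ) - 1)) *
        (favg (fun σ => chi t (1 + xx P m a σ) * (psi t k (P' σ) a - T)) +
         (favg (fun σ => chi t (1 + xx P m a σ)) - (1 - cc t * vv n m)) * T) := by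
      have e1 : favg (fun σ : Perm (Fin n) => chi t (qf P fun k => a (σ k)) * psi t k (P' σ) a) =
        chi t (m / ((n : ℝ) - 1)) *
          (favg (fun σ => chi t (1 + xx P m a σ) * (psi t k (P' σ) a - T)) +
          T * favg (fun σ => chi t (1 + xx P m a σ))) := by
        rw [← favg_cmul_left T, ← favg_add, ← favg_cmul_left]
        congr 1; ext σ; rw [hq]; ring
      rw [e1]; ring
    rw [e, norm_mul]
    have hTn : ‖T‖ ≤ B := TT_norm hδ t n hn k (m - 1) (by linarith) (by linarith)
    have f1 : ‖(favg (fun σ => chi t (1 + xx P m a σ)) - (1 - cc t * vv n m)) * T‖ ≤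
        A * (dev P m / (n : ℝ) ^ 2 + 1 / (n * √n)) * B := by
      rw [norm_mul]
      have := hchi n P m a h hn hmn hm1 ha
      have h0 := h.dev_nonneg (by omega : 1 ≤ n)
      gcongr
    have f2 : ‖favg (fun σ => chi t (1 + xx P m a σ) * (psi t k (P' σ) a - T))‖ ≤
        A * B * (k * ((dev P m + C / √n) / (n : ℝ) ^ 2) + k * (1 / (n * √n)) +
          k ^ 2 * (C / ((n : ℝ) ^ 2 * √n))) := by
      refine (norm_favg_le _).trans ?_
      calc _ ≤ favg (fun σ => (A * B * (k / (n : ℝ) ^ 2)) * dev (P' σ) (m - 1) +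
              A * B * (k * (1 / (n * √n)) + k ^ 2 * (C / ((n : ℝ) ^ 2 * √n)))) := by
            refine favg_mono _ _ fun σ => ?_
            rw [norm_mul]
            have g := ih (P' σ) (m - 1) (hP1 σ) (by linarith) (by linarith)
            calc _ ≤ 1 * ‖psi t k (P' σ) a - T‖ := by gcongr; exact chi_norm _ _
              _ = ‖psi t k (P' σ) a - T‖ := one_mul _
              _ ≤ _ := g
              _ = _ := by ring
        _ = (A * B * (k / (n : ℝ) ^ 2)) * favg (fun σ => dev (P' σ) (m - 1)) +
              A * B * (k * (1 / (n * √n)) + k ^ 2 * (C / ((n : ℝ) ^ 2 * √n))) := by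
            rw [favg_add, favg_const, favg_mul_left]
        _ ≤ (A * B * (k / (n : ℝ) ^ 2)) * (dev P m + C / √n) +
              A * B * (k * (1 / (n * √n)) + k ^ 2 * (C / ((n : ℝ) ^ 2 * √n))) := by gcongr
        _ = _ := by ring
    calc _ ≤ 1 * ‖favg (fun σ => chi t (1 + xx P m a σ) * (psi t k (P' σ) a - T)) +
         (favg (fun σ => chi t (1 + xx P m a σ)) - (1 - cc t * vv n m)) * T‖ := by
          gcongr; exact chi_norm _ _
      _ ≤ _ := by rw [one_mul]; exact norm_add_le _ _
      _ ≤ _ := add_le_add f2 f1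
      _ = A * B * ((k + 1) * (dev P m / (n : ℝ) ^ 2) + (k + 1) * (1 / (n * √n)) +
          (k + k ^ 2) * (C / ((n : ℝ) ^ 2 * √n))) := by field_simp; ring
      _ ≤ _ := by
          push_cast
          gcongr
          nlinarith

theorem psi_cproj {δ : ℝ} (hδ : 0 < δ) (t : ℝ) : ∃ K : ℝ,
    ∀ (n : ℕ) (a : Fin n → ℝ), 4 ≤ n → GoodVec a → ∀ (k : ℕ), δ * n ≤ (n : ℝ) - 1 - k →
    ‖psi t k (cproj n) a - TT t n k ((n : ℝ) - 1)‖ ≤ K / √n := by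
  obtain ⟨K, C, hK, hC, h⟩ := psi_bound hδ t
  refine ⟨K * (1 + C), fun n a hn ha k hk => ?_⟩
  have hn' : (4 : ℝ) ≤ n := by exact_mod_cast hn
  have hs : 0 < √(n : ℝ) := Real.sqrt_pos.2 (by linarith)
  have hkn : (k : ℝ) ≤ n := by
    have : 0 < δ * n := by positivity
    linarith
  have := h n a hn ha k (cproj n) ((n : ℝ) - 1) (isProj_cproj (by omega)) hk le_rfl
  have hd : dev (cproj n) ((n : ℝ) - 1) = 0 := by
    rw [dev, cproj_diag (by omega), sub_self]
  rw [hd] at this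
  refine this.trans ?_
  calc _ = K * (k * (1 / (n * √n)) + k ^ 2 * (C / ((n : ℝ) ^ 2 * √n))) := by ring
    _ ≤ K * (n * (1 / (n * √n)) + (n : ℝ) ^ 2 * (C / ((n : ℝ) ^ 2 * √n))) := by gcongr
    _ = _ := by field_simp

open Equiv

theorem prod_sub_prod (r ε : ℝ) (hr : 1 ≤ r) (hε : 0 ≤ ε) (a b : ℕ → ℂ) : ∀ k : ℕ,
    (∀ i < k, ‖a i‖ ≤ r ∧ ‖b i‖ ≤ r ∧ ‖a i - b i‖ ≤ ε) →
    ‖∏ i ∈ Finset.range k, b i‖ ≤ r ^ k ∧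
    ‖∏ i ∈ Finset.range k, a i - ∏ i ∈ Finset.range k, b i‖ ≤ k * ε * r ^ k := by
  intro k
  induction k with
  | zero => intro _; simp
  | succ k ih =>
    intro h
    obtain ⟨i1, i2⟩ := ih fun i hi => h i (by omega)
    obtain ⟨h1, h2, h3⟩ := h k (by omega)
    rw [Finset.prod_range_succ, Finset.prod_range_succ]
    set A := ∏ i ∈ Finset.range k, a i
    set B := ∏ i ∈ Finset.range k, b i
    constructor
    · rw [norm_mul, pow_succ]
      exact mul_le_mul i1 h2 (norm_nonneg _) (by positivity)
    · have : A * a k - B * b k = a k * (A - B) + (a k - b k) * B := by ring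
      rw [this]
      refine (norm_add_le _ _).trans ?_
      rw [norm_mul, norm_mul]
      calc _ ≤ r * (k * ε * r ^ k) + ε * r ^ k := by gcongr
        _ ≤ r * (k * ε * r ^ k) + ε * r ^ k * r := by
            have : 0 ≤ ε * r ^ k := by positivity
            nlinarith
        _ = _ := by push_cast; ring

/-- sum of logs -/
noncomputable def SS (n k : ℕ) : ℝ := ∑ i ∈ Finset.range k, Real.log (((n : ℝ) - 1 - i) / ((n : ℝ) - 1))
/-- sum of variances -/
noncomputable def VV (n k : ℕ) : ℝ := ∑ i ∈ Finset.range k, vv n ((n : ℝ) - 1 - i)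

theorem TT_approx {δ : ℝ} (hδ : 0 < δ) (t : ℝ) (n k : ℕ) (hn : 4 ≤ n)
    (hk : δ * n ≤ (n : ℝ) - 1 - k) (hb : ‖cc t‖ * (2 / δ) ≤ n) :
    ‖TT t n k ((n : ℝ) - 1) - Complex.exp ((t * SS n k : ℝ) * Complex.I - cc t * VV n k)‖ ≤
      (‖cc t‖ * (2 / δ)) ^ 2 * Real.exp (‖cc t‖ * (2 / δ)) / n := by
  set B := ‖cc t‖ * (2 / δ) with hB
  have hB0 : 0 ≤ B := by positivity
  have hn' : (4 : ℝ) ≤ n := by exact_mod_cast hn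
  have hkn : (k : ℝ) ≤ n := by
    have : 0 < δ * n := by positivity
    linarith
  have e1 : Complex.exp ((t * SS n k : ℝ) * Complex.I - cc t * VV n k) =
      ∏ i ∈ Finset.range k, (chi t (((n : ℝ) - 1 - i) / ((n : ℝ) - 1)) *
        Complex.exp (-(cc t * vv n ((n : ℝ) - 1 - i)))) := by
    rw [SS, VV]
    push_cast
    rw [Finset.mul_sum, Finset.sum_mul, Finset.mul_sum, ← Finset.sum_sub_distrib, Complex.exp_sum]
    refine Finset.prod_congr rfl fun i hi => ?_
    have hi' : (i : ℝ) ≤ k := by exact_mod_cast (Finset.mem_range.1 hi).le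
    have hmi : δ * n ≤ (n : ℝ) - 1 - i := by linarith
    obtain ⟨hm0, -, -⟩ := c_le hδ hn hmi
    have : ((n : ℝ) - 1 - i) / ((n : ℝ) - 1) ≠ 0 := (div_pos hm0 (by linarith)).ne'
    rw [chi, if_neg this, ← Complex.exp_add]
    congr 1; push_cast; ring
  have hp := prod_sub_prod (Real.exp (B / n)) ((B / n) ^ 2) (Real.one_le_exp (by positivity)) (by positivity)
    (fun i => chi t (((n : ℝ) - 1 - i) / ((n : ℝ) - 1)) * (1 - cc t * vv n ((n : ℝ) - 1 - i)))
    (fun i => chi t (((n : ℝ) - 1 - i) / ((n : ℝ) - 1)) *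
        Complex.exp (-(cc t * vv n ((n : ℝ) - 1 - i)))) k ?_
  · rw [TT, e1]
    refine hp.2.trans ?_
    rw [← Real.exp_nat_mul]
    calc _ ≤ (n : ℝ) * (B / n) ^ 2 * Real.exp (n * (B / n)) := by gcongr
      _ = _ := by
        rw [mul_div_cancel₀ B (by linarith : (n : ℝ) ≠ 0)]
        field_simp
  · intro i hi
    have hi' : (i : ℝ) ≤ k := by exact_mod_cast hi.le
    have hmi : δ * n ≤ (n : ℝ) - 1 - i := by linarith
    have hv := vv_le hδ hn hmi
    have i0 : (0 : ℝ) ≤ i := by positivity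
    have hv0 := vv_nonneg hδ hn hmi (by linarith)
    set z : ℂ := -(cc t * vv n ((n : ℝ) - 1 - i)) with hz
    have hzn : ‖z‖ ≤ B / n := by
      rw [hz, norm_neg, norm_mul, Complex.norm_real, Real.norm_eq_abs, abs_of_nonneg hv0, hB,
        mul_div_assoc]
      gcongr
      rw [le_div_iff₀ (by linarith)]; exact hv
    have hB1 : B / n ≤ 1 := (div_le_one (by linarith)).2 hb
    have hc := chi_norm t (((n : ℝ) - 1 - i) / ((n : ℝ) - 1))
    have e2 : (1 - cc t * (vv n ((n : ℝ) - 1 - i) : ℂ)) = 1 + z := by rw [hz]; ring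
    simp only [e2, ← mul_sub, norm_mul]
    refine ⟨?_, ?_, ?_⟩
    · calc _ ≤ 1 * (1 + B / n) := by
            refine mul_le_mul hc ((norm_add_le _ _).trans ?_) (norm_nonneg _) zero_le_one
            rw [norm_one]; gcongr
        _ ≤ _ := by linarith [Real.add_one_le_exp (B / n)]
    · calc _ ≤ 1 * Real.exp (B / n) := by
            refine mul_le_mul hc ?_ (norm_nonneg _) zero_le_one
            exact (Complex.norm_exp_le_exp_norm z).trans (Real.exp_le_exp.2 hzn)
        _ = _ := one_mul _
    · calc _ ≤ 1 * (B / n) ^ 2 := by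
            refine mul_le_mul hc ?_ (norm_nonneg _) zero_le_one
            have := Complex.norm_exp_sub_one_sub_id_le (hzn.trans hB1)
            rw [← norm_neg, show -(1 + z - Complex.exp z) = Complex.exp z - 1 - z by ring]
            exact this.trans (by gcongr)
        _ = _ := one_mul _

theorem SS_eq (n k : ℕ) (h : k + 2 ≤ n) :
    SS n k = Real.log ((n - 1).factorial) - Real.log ((n - 1 - k).factorial) - k * Real.log ((n : ℝ) - 1) := by
  rw [SS]
  induction k with
  | zero => simp
  | succ k ih =>
    have hn' : (k : ℝ) + 1 + 2 ≤ n := by exact_mod_cast h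
    have hk0 : (0 : ℝ) ≤ k := by positivity
    rw [Finset.sum_range_succ, ih (by omega), Real.log_div (by linarith) (by linarith)]
    have e : n - 1 - k = (n - 1 - (k + 1)) + 1 := by omega
    have e2 : (n : ℝ) - 1 - k = ((n - 1 - (k + 1) : ℕ) : ℝ) + 1 := by
      rw [Nat.sub_sub, Nat.cast_sub (by omega)]; push_cast; ring
    rw [e2, e, Nat.factorial_succ]
    push_cast
    rw [Real.log_mul (by positivity) (by positivity)]
    ring

theorem VV_eq (n k : ℕ) (h : k + 2 ≤ n) :
    VV n k = 2 / ((n : ℝ) + 1) * (((n : ℝ) - 1) * ((harmonic (n - 1) : ℝ) - harmonic (n - 1 - k)) - k) := by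
  rw [VV]
  induction k with
  | zero => simp
  | succ k ih =>
    have hn' : (k : ℝ) + 1 + 2 ≤ n := by exact_mod_cast h
    have hk0 : (0 : ℝ) ≤ k := by positivity
    rw [Finset.sum_range_succ, ih (by omega)]
    have e : n - 1 - k = (n - 1 - (k + 1)) + 1 := by omega
    have e2 : (n : ℝ) - 1 - k = ((n - 1 - (k + 1) : ℕ) : ℝ) + 1 := by
      rw [Nat.sub_sub, Nat.cast_sub (by omega)]; push_cast; ring
    have e3 : ((harmonic (n - 1 - k) : ℚ) : ℝ) = harmonic (n - 1 - (k + 1)) + 1 / ((n : ℝ) - 1 - k) := by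
      rw [e, harmonic_succ, e2]; push_cast; ring
    rw [e3, vv]
    have : (n : ℝ) - 1 - k ≠ 0 := by linarith
    push_cast
    field_simp
    ring

section
open Filter Topology

theorem ev_delta (y : ℝ) (hy1 : y < 1) (p : ℕ → ℕ)
    (hpy : Filter.Tendsto (fun n => (p n : ℝ) / (n : ℝ)) Filter.atTop (nhds y)) :
    ∀ᶠ n : ℕ in atTop, (1 - y) / 2 * n ≤ (n : ℝ) - 1 - p n := by
  have h1 : Tendsto (fun n : ℕ => 1 - 1 / (n : ℝ) - (p n : ℝ) / n) atTop (𝓝 (1 - 0 - y)) :=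
    (tendsto_const_nhds.sub (tendsto_const_div_atTop_nhds_zero_nat 1)).sub hpy
  have h2 := h1.eventually (lt_mem_nhds (show (1 - y) / 2 < 1 - 0 - y by linarith))
  filter_upwards [h2, eventually_gt_atTop 0] with n hn h0
  have h0' : (0 : ℝ) < n := by exact_mod_cast h0
  have := mul_lt_mul_of_pos_right hn h0'
  have e : (1 - 1 / (n : ℝ) - (p n : ℝ) / n) * n = n - 1 - p n := by field_simp
  linarith

theorem ev_two (y : ℝ) (hy1 : y < 1) (p : ℕ → ℕ)
    (hpy : Filter.Tendsto (fun n => (p n : ℝ) / (n : ℝ)) Filter.atTop (nhds y)) :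
    ∀ᶠ n : ℕ in atTop, p n + 2 ≤ n := by
  have h3 : Tendsto (fun n : ℕ => (1 - y) / 2 * (n : ℝ)) atTop atTop :=
    tendsto_natCast_atTop_atTop.const_mul_atTop (by linarith)
  filter_upwards [ev_delta y hy1 p hpy, h3.eventually_ge_atTop 1] with n h1 h2
  have : (p n : ℝ) + 2 ≤ n := by linarith
  exact_mod_cast this

theorem M_atTop (y : ℝ) (hy1 : y < 1) (p : ℕ → ℕ)
    (hpy : Filter.Tendsto (fun n => (p n : ℝ) / (n : ℝ)) Filter.atTop (nhds y)) :
    Tendsto (fun n : ℕ => n - 1 - p n) atTop atTop := by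
  have h3 : Tendsto (fun n : ℕ => (1 - y) / 2 * (n : ℝ)) atTop atTop :=
    tendsto_natCast_atTop_atTop.const_mul_atTop (by linarith)
  rw [← tendsto_natCast_atTop_iff (R := ℝ)]
  refine tendsto_atTop_mono' _ ?_ h3
  filter_upwards [ev_delta y hy1 p hpy, ev_two y hy1 p hpy] with n h1 h2
  rw [Nat.sub_sub, Nat.cast_sub (by omega)]; push_cast; linarith

theorem N_atTop : Tendsto (fun n : ℕ => n - 1) atTop atTop := tendsto_sub_atTop_nat 1

theorem ratio_tendsto (y : ℝ) (p : ℕ → ℕ)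
    (hpy : Filter.Tendsto (fun n => (p n : ℝ) / (n : ℝ)) Filter.atTop (nhds y)) :
    Tendsto (fun n : ℕ => ((n : ℝ) - 1 - p n) / ((n : ℝ) - 1)) atTop (𝓝 (1 - y)) := by
  have h0 := tendsto_const_div_atTop_nhds_zero_nat (1 : ℝ)
  have h1 : Tendsto (fun n : ℕ => (1 - 1 / (n : ℝ) - (p n : ℝ) / n) / (1 - 1 / (n : ℝ))) atTop
      (𝓝 ((1 - 0 - y) / (1 - 0))) :=
    ((tendsto_const_nhds.sub h0).sub hpy).div (tendsto_const_nhds.sub h0) (by norm_num)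
  rw [show (1 - 0 - y) / (1 - 0) = 1 - y by ring] at h1
  refine h1.congr' ?_
  filter_upwards [eventually_ge_atTop 2] with n hn
  have hn' : (2 : ℝ) ≤ n := by exact_mod_cast hn
  have : (n : ℝ) - 1 ≠ 0 := by linarith
  have h2 : 1 - 1 / (n : ℝ) = (n - 1) / n := by field_simp
  rw [h2]
  field_simp

theorem VV_tendsto (y : ℝ) (hy1 : y < 1) (p : ℕ → ℕ)
    (hpy : Filter.Tendsto (fun n => (p n : ℝ) / (n : ℝ)) Filter.atTop (nhds y)) :
    Tendsto (fun n => VV n (p n)) atTop (𝓝 (-2 * Real.log (1 - y) - 2 * y)) := by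
  have h0 := tendsto_const_div_atTop_nhds_zero_nat (1 : ℝ)
  have hN := Real.tendsto_harmonic_sub_log.comp N_atTop
  have hM := Real.tendsto_harmonic_sub_log.comp (M_atTop y hy1 p hpy)
  have hL := (Real.continuousAt_log (by linarith : (1 - y) ≠ 0)).tendsto.comp (ratio_tendsto y p hpy)
  have hd : Tendsto (fun n : ℕ => (harmonic (n - 1) : ℝ) - harmonic (n - 1 - p n)) atTop
      (𝓝 (-Real.log (1 - y))) := by
    have := (hN.sub hM).sub hL
    rw [sub_self, zero_sub] at this
    refine this.congr' ?_
    filter_upwards [ev_two y hy1 p hpy] with n hn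
    have hn' : (p n : ℝ) + 2 ≤ n := by exact_mod_cast hn
    have hk0 : (0 : ℝ) ≤ p n := by positivity
    simp only [Function.comp]
    rw [Real.log_div (by linarith) (by linarith), Nat.sub_sub, Nat.cast_sub (by omega),
      Nat.cast_sub (by omega)]
    push_cast
    rw [← sub_sub]
    ring
  have h1 : Tendsto (fun n : ℕ => 2 / (1 + 1 / (n : ℝ)) *
      ((1 - 1 / (n : ℝ)) * ((harmonic (n - 1) : ℝ) - harmonic (n - 1 - p n)) - (p n : ℝ) / n)) atTop
      (𝓝 (2 / (1 + 0) * ((1 - 0) * (-Real.log (1 - y)) - y))) :=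
    ((tendsto_const_nhds).div (tendsto_const_nhds.add h0) (by norm_num)).mul
      (((tendsto_const_nhds.sub h0).mul hd).sub hpy)
  rw [show 2 / (1 + 0) * ((1 - 0) * (-Real.log (1 - y)) - y) = -2 * Real.log (1 - y) - 2 * y by ring] at h1
  refine h1.congr' ?_
  filter_upwards [ev_two y hy1 p hpy] with n hn
  have hn' : (p n : ℝ) + 2 ≤ n := by exact_mod_cast hn
  have hk0 : (0 : ℝ) ≤ p n := by positivity
  have hn0 : (n : ℝ) ≠ 0 := by linarith
  rw [VV_eq n _ hn]
  have h2 : 1 - 1 / (n : ℝ) = (n - 1) / n := by field_simp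
  have h3 : 1 + 1 / (n : ℝ) = (n + 1) / n := by field_simp
  rw [h2, h3]
  have : (n : ℝ) + 1 ≠ 0 := by linarith
  field_simp

theorem SS_tendsto (y : ℝ) (hy1 : y < 1) (p : ℕ → ℕ)
    (hpy : Filter.Tendsto (fun n => (p n : ℝ) / (n : ℝ)) Filter.atTop (nhds y)) :
    Tendsto (fun n => SS n (p n) + ((n : ℝ) - p n) * Real.log (1 - (p n : ℝ) / n) + p n)
    atTop (𝓝 (1 / 2 * Real.log (1 - y) + y)) := by
  have hN := N_atTop
  have hM := M_atTop y hy1 p hpy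
  have hls : Tendsto (fun n => Real.log (Stirling.stirlingSeq n)) atTop (𝓝 (Real.log √Real.pi)) :=
    (Real.continuousAt_log (Real.sqrt_pos.2 Real.pi_pos).ne').tendsto.comp
      Stirling.tendsto_stirlingSeq_sqrt_pi
  have hr := ratio_tendsto y p hpy
  have hL := (Real.continuousAt_log (by linarith : (1 - y) ≠ 0)).tendsto.comp hr
  have hL2 : Tendsto (fun n => Real.log (1 - (p n : ℝ) / n)) atTop (𝓝 (Real.log (1 - y))) :=
    (Real.continuousAt_log (by linarith : (1 - y) ≠ 0)).tendsto.comp (tendsto_const_nhds.sub hpy)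
  have hMr : Tendsto (fun n : ℕ => ((n - 1 - p n : ℕ) : ℝ)) atTop atTop :=
    tendsto_natCast_atTop_atTop.comp hM
  have hNr : Tendsto (fun n : ℕ => ((n - 1 : ℕ) : ℝ)) atTop atTop :=
    tendsto_natCast_atTop_atTop.comp hN
  have m1 := (Real.tendsto_mul_log_one_add_div_atTop 1).comp hMr
  have m2 := (Real.tendsto_mul_log_one_add_div_atTop 1).comp hNr
  have main := ((((hls.comp hN).sub (hls.comp hM)).sub (hL.const_mul (1 / 2))).add hL2).add
    (m1.sub (hr.mul m2))
  rw [show Real.log √Real.pi - Real.log √Real.pi - 1 / 2 * Real.log (1 - y) + Real.log (1 - y) +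
    (1 - (1 - y) * 1) = 1 / 2 * Real.log (1 - y) + y by ring] at main
  refine main.congr' ?_
  filter_upwards [ev_two y hy1 p hpy] with n hn
  have hn' : (p n : ℝ) + 2 ≤ n := by exact_mod_cast hn
  have hk0 : (0 : ℝ) ≤ p n := by positivity
  simp only [Function.comp]
  rw [SS_eq n _ hn, Stirling.log_stirlingSeq_formula, Stirling.log_stirlingSeq_formula]
  have eN : ((n - 1 : ℕ) : ℝ) = (n : ℝ) - 1 := by rw [Nat.cast_sub (by omega)]; simp
  have eM : ((n - 1 - p n : ℕ) : ℝ) = (n : ℝ) - 1 - p n := by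
    rw [Nat.sub_sub, Nat.cast_sub (by omega)]; push_cast; ring
  rw [eN, eM]
  set N : ℝ := (n : ℝ) - 1 with hNd
  set M : ℝ := N - p n with hMd
  have hN0 : 0 < N := by linarith
  have hM0 : 0 < M := by linarith
  have p1 : (p n : ℝ) = N - M := by rw [hMd]; ring
  have p2 : (n : ℝ) = N + 1 := by rw [hNd]; ring
  rw [show 1 - (p n : ℝ) / n = (M + 1) / (N + 1) by
    rw [← p2, eq_div_iff (by linarith), sub_mul, div_mul_cancel₀ _ (by linarith : (n : ℝ) ≠ 0)]; linarith]
  rw [show 1 + 1 / M = (M + 1) / M by field_simp, show 1 + 1 / N = (N + 1) / N by field_simp]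
  rw [Real.log_div, Real.log_div, Real.log_div, Real.log_div, Real.log_div, Real.log_div,
    Real.log_mul, Real.log_mul, Real.log_exp, p1, p2] <;> try positivity
  field_simp
  ring
end

open Equiv

/-- normalized rank scores -/
noncomputable def score (n : ℕ) (i : Fin n) : ℝ :=
  √(12 / ((n : ℝ) * ((n : ℝ) ^ 2 - 1))) * (((i : ℕ) : ℝ) + 1 - ((n : ℝ) + 1) / 2)

theorem sum_lin (n : ℕ) (c : ℝ) : ∑ i ∈ Finset.range n, ((i : ℝ) + 1 - c) = n * (n + 1) / 2 - n * c := by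
  induction n with
  | zero => simp
  | succ n ih => rw [Finset.sum_range_succ, ih]; push_cast; ring

theorem sum_quad (n : ℕ) (c : ℝ) : ∑ i ∈ Finset.range n, ((i : ℝ) + 1 - c) ^ 2 =
    n * (n + 1) * (2 * n + 1) / 6 - n * (n + 1) * c + n * c ^ 2 := by
  induction n with
  | zero => simp
  | succ n ih => rw [Finset.sum_range_succ, ih]; push_cast; ring

theorem goodVec_score (n : ℕ) (hn : 4 ≤ n) : GoodVec (score n) := by
  have hn' : (4 : ℝ) ≤ n := by exact_mod_cast hn
  have hp : 0 < (n : ℝ) ^ 2 - 1 := by nlinarith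
  have h0 : 0 ≤ 12 / ((n : ℝ) * ((n : ℝ) ^ 2 - 1)) := by positivity
  refine ⟨?_, ?_, ?_⟩
  · simp only [score, ← Finset.mul_sum]
    rw [Fin.sum_univ_eq_sum_range (fun i => ((i : ℝ) + 1 - ((n : ℝ) + 1) / 2)), sum_lin]
    ring
  · simp only [score, mul_pow, ← Finset.mul_sum, Real.sq_sqrt h0]
    rw [Fin.sum_univ_eq_sum_range (fun i => ((i : ℝ) + 1 - ((n : ℝ) + 1) / 2) ^ 2), sum_quad]
    field_simp
    ring
  · intro i
    simp only [score, mul_pow, Real.sq_sqrt h0]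
    have hi : ((i : ℕ) : ℝ) + 1 ≤ n := by exact_mod_cast i.2
    have hi0 : (0 : ℝ) ≤ ((i : ℕ) : ℝ) := by positivity
    have : (((i : ℕ) : ℝ) + 1 - ((n : ℝ) + 1) / 2) ^ 2 ≤ (((n : ℝ) - 1) / 2) ^ 2 := by
      apply sq_le_sq'<;> linarith
    calc _ ≤ 12 / ((n : ℝ) * ((n : ℝ) ^ 2 - 1)) * (((n : ℝ) - 1) / 2) ^ 2 := by gcongr
      _ = 3 / n * ((n - 1) / (n + 1)) := by
          have : (n : ℝ) ^ 2 - 1 = (n - 1) * (n + 1) := by ring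
          have h1 : (n : ℝ) - 1 ≠ 0 := by linarith
          rw [this]; field_simp; norm_num
      _ ≤ 3 / n * 1 := by
          gcongr
          rw [div_le_one (by linarith)]; linarith
      _ = _ := mul_one _

theorem bf_cproj {n : ℕ} (u v : Fin n → ℝ) (hv : ∑ i, v i = 0) :
    bf (cproj n) u v = ∑ k, u k * v k := by
  rw [bf_eq_left]
  refine Finset.sum_congr rfl fun k _ => ?_
  congr 1
  simp only [mv, cproj, sub_mul, Finset.sum_sub_distrib, ← Finset.mul_sum, hv, kd]
  simp

theorem spearman_eq_gram (n p : ℕ) (hn : 4 ≤ n) (ω : Fin p → Perm (Fin n)) :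
    spearmanRho n p ω = gram (cproj n) (fun i j => score n (ω i j)) := by
  have hn' : (4 : ℝ) ≤ n := by exact_mod_cast hn
  have hp : 0 < (n : ℝ) ^ 2 - 1 := by nlinarith
  have h0 : 0 ≤ 12 / ((n : ℝ) * ((n : ℝ) ^ 2 - 1)) := by positivity
  ext i j
  rw [gram, Matrix.of_apply, bf_cproj _ _ (by
    rw [sum_perm (score n)]; exact (goodVec_score n hn).sum0)]
  rw [spearmanRho, Matrix.smul_apply, Matrix.sum_apply, smul_eq_mul, Finset.mul_sum]
  refine Finset.sum_congr rfl fun k _ => ?_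
  rw [Matrix.vecMulVec_apply, score, score]
  conv_lhs => rw [← Real.mul_self_sqrt h0]
  ring

theorem integral_perm (n p : ℕ) (f : (Fin p → Perm (Fin n)) → ℂ) :
    ∫ ω, f ω ∂(permVecUniform n p) = favg f := by
  haveI : DiscreteMeasurableSpace (Fin p → Perm (Fin n)) :=
    ⟨fun s => MeasurableSpace.measurableSet_top⟩
  rw [permVecUniform, PMF.integral_eq_sum, favg, Finset.smul_sum]
  refine Finset.sum_congr rfl fun ω _ => ?_
  simp

section
open Filter Topology

theorem psi_tendsto (t : ℝ) (y : ℝ) (hy1 : y < 1) (p : ℕ → ℕ)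
    (hpy : Filter.Tendsto (fun n => (p n : ℝ) / (n : ℝ)) Filter.atTop (nhds y)) :
    Tendsto (fun n => psi t (p n) (cproj n) (score n) -
      Complex.exp ((t * SS n (p n) : ℝ) * Complex.I - cc t * VV n (p n))) atTop (𝓝 0) := by
  have hδ : 0 < (1 - y) / 2 := by linarith
  obtain ⟨K, hK⟩ := psi_cproj hδ t
  set B := ‖cc t‖ * (2 / ((1 - y) / 2)) with hB
  have hs : Tendsto (fun n : ℕ => K / √(n : ℝ)) atTop (𝓝 0) :=
    (Real.tendsto_sqrt_atTop.comp tendsto_natCast_atTop_atTop).const_div_atTop K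
  have h2 := hs.add (tendsto_const_div_atTop_nhds_zero_nat (B ^ 2 * Real.exp B))
  rw [add_zero] at h2
  refine squeeze_zero_norm' ?_ h2
  filter_upwards [ev_delta y hy1 p hpy, eventually_ge_atTop 4,
    tendsto_natCast_atTop_atTop.eventually_ge_atTop B] with n h1 hn hb
  have a1 := hK n (score n) hn (goodVec_score n hn) (p n) h1
  have a2 := TT_approx hδ t n (p n) hn h1 hb
  calc _ ≤ _ := norm_sub_le_norm_sub_add_norm_sub _ (TT t n (p n) ((n : ℝ) - 1)) _
    _ ≤ _ := add_le_add a1 a2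

theorem char_tendsto (t : ℝ) (y : ℝ) (hy1 : y < 1) (p : ℕ → ℕ)
    (hpy : Filter.Tendsto (fun n => (p n : ℝ) / (n : ℝ)) Filter.atTop (nhds y)) :
    Tendsto (fun n => favg (fun ω : Fin (p n) → Perm (Fin n) => Complex.exp
      ((t * (Real.log (spearmanRho n (p n) ω).det
            + ((n : ℝ) - (p n : ℝ)) * Real.log (1 - (p n : ℝ) / (n : ℝ)) + (p n : ℝ)) : ℝ) * Complex.I)))
      atTop (𝓝 (Complex.exp ((t * (1 / 2 * Real.log (1 - y) + y) : ℝ) * Complex.I -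
        cc t * ((-2 * Real.log (1 - y) - 2 * y : ℝ) : ℂ)))) := by
  set b : ℕ → ℝ := fun n => ((n : ℝ) - (p n : ℝ)) * Real.log (1 - (p n : ℝ) / (n : ℝ)) + (p n : ℝ) with hb
  set E : ℕ → ℂ := fun n => Complex.exp ((t * b n : ℝ) * Complex.I) with hE
  have hEn : ∀ n, ‖E n‖ = 1 := fun n => Complex.norm_exp_ofReal_mul_I _
  have l1 : Tendsto (fun n => Complex.exp ((t * (SS n (p n) + ((n : ℝ) - (p n : ℝ)) *
      Real.log (1 - (p n : ℝ) / (n : ℝ)) + (p n : ℝ)) : ℝ) * Complex.I - cc t * VV n (p n))) atTop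
      (𝓝 (Complex.exp ((t * (1 / 2 * Real.log (1 - y) + y) : ℝ) * Complex.I -
        cc t * ((-2 * Real.log (1 - y) - 2 * y : ℝ) : ℂ)))) := by
    refine (Complex.continuous_exp.tendsto _).comp (Tendsto.sub (Tendsto.mul_const _ ?_)
      (Tendsto.const_mul _ ?_))
    · exact (Complex.continuous_ofReal.tendsto _).comp ((SS_tendsto y hy1 p hpy).const_mul t)
    · exact (Complex.continuous_ofReal.tendsto _).comp (VV_tendsto y hy1 p hpy)
  have l2 := psi_tendsto t y hy1 p hpy
  have l3 := psi_tendsto 0 y hy1 p hpy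
  have l23 : Tendsto (fun n => ‖psi t (p n) (cproj n) (score n) -
      Complex.exp ((t * SS n (p n) : ℝ) * Complex.I - cc t * VV n (p n))‖ +
      ‖psi 0 (p n) (cproj n) (score n) -
      Complex.exp ((0 * SS n (p n) : ℝ) * Complex.I - cc 0 * VV n (p n))‖) atTop (𝓝 0) := by
    simpa using l2.norm.add l3.norm
  have l4 : Tendsto (fun n => favg (fun ω : Fin (p n) → Perm (Fin n) => Complex.exp
      ((t * (Real.log (spearmanRho n (p n) ω).det
            + ((n : ℝ) - (p n : ℝ)) * Real.log (1 - (p n : ℝ) / (n : ℝ)) + (p n : ℝ)) : ℝ) * Complex.I))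
      - Complex.exp ((t * (SS n (p n) + ((n : ℝ) - (p n : ℝ)) *
      Real.log (1 - (p n : ℝ) / (n : ℝ)) + (p n : ℝ)) : ℝ) * Complex.I - cc t * VV n (p n)))
      atTop (𝓝 0) := by
    refine squeeze_zero_norm' ?_ l23
    filter_upwards [eventually_ge_atTop 4] with n hn
    have e0 : ∀ x : ℝ, Complex.exp ((t * (x + ((n : ℝ) - (p n : ℝ)) *
        Real.log (1 - (p n : ℝ) / (n : ℝ)) + (p n : ℝ)) : ℝ) * Complex.I) =
        E n * Complex.exp ((t * x : ℝ) * Complex.I) := by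
      intro x
      rw [hE, ← Complex.exp_add, hb]
      congr 1
      push_cast; ring
    simp only [e0]
    rw [Complex.exp_sub, e0, mul_div_assoc, ← Complex.exp_sub, favg_cmul_left, ← mul_sub, norm_mul,
      hEn, one_mul]
    have e1 : ‖favg (fun ω : Fin (p n) → Perm (Fin n) =>
        Complex.exp ((t * Real.log (spearmanRho n (p n) ω).det : ℝ) * Complex.I)) -
        psi t (p n) (cproj n) (score n)‖ ≤ ‖1 - psi 0 (p n) (cproj n) (score n)‖ := by
      set ind : (Fin (p n) → Perm (Fin n)) → ℝ := fun ω =>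
        if (spearmanRho n (p n) ω).det = 0 then 1 else 0 with hind
      have f1 : 1 - psi 0 (p n) (cproj n) (score n) = ((favg ind : ℝ) : ℂ) := by
        rw [psi, ← favg_const (α := Fin (p n) → Perm (Fin n)) (1 : ℂ), ← favg_sub, ← favg_ofReal]
        congr 1; ext1 ω
        rw [← spearman_eq_gram n (p n) hn ω, hind, chi]
        by_cases h : (spearmanRho n (p n) ω).det = 0
        · simp [h]
        · simp [h]
      rw [f1, Complex.norm_real, Real.norm_eq_abs]
      refine le_trans ?_ (le_abs_self _)
      rw [psi, ← favg_sub]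
      refine (norm_favg_le _).trans (favg_mono _ _ fun ω => ?_)
      rw [← spearman_eq_gram n (p n) hn ω, hind, chi]
      by_cases h : (spearmanRho n (p n) ω).det = 0
      · simp [h]
      · simp [h]
    have e2 : ‖1 - psi 0 (p n) (cproj n) (score n)‖ = ‖psi 0 (p n) (cproj n) (score n) -
      Complex.exp ((0 * SS n (p n) : ℝ) * Complex.I - cc 0 * VV n (p n))‖ := by
      rw [norm_sub_rev]; simp [cc]
    have e3 := norm_sub_le_norm_sub_add_norm_sub (favg (fun ω : Fin (p n) → Perm (Fin n) =>
        Complex.exp ((t * Real.log (spearmanRho n (p n) ω).det : ℝ) * Complex.I)))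
        (psi t (p n) (cproj n) (score n))
        (Complex.exp ((t * SS n (p n) : ℝ) * Complex.I - cc t * VV n (p n)))
    linarith
  have := l4.add l1
  simpa using this

theorem log_neg_bound (y : ℝ) (hy0 : 0 < y) (hy1 : y < 1) : 0 ≤ -2 * Real.log (1 - y) - 2 * y := by
  have := Real.log_le_sub_one_of_pos (show 0 < 1 - y by linarith)
  linarith
end

end Helpers

/-- (CLT for the log-determinant of Spearman's rank correlation matrix.)
If `p(n)/n → y ∈ (0,1)`, then `log det ρₙ + (n − p(n))·log(1 − p(n)/n) + p(n)` converges in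
distribution to `N((3/2)log(1−y) + 2y, −2log(1−y) − 2y)`; convergence in distribution is
expressed by testing against all bounded continuous functions. -/
theorem spearman_logdet_clt (y : ℝ) (hy0 : 0 < y) (hy1 : y < 1)
    (p : ℕ → ℕ) (hp : ∀ n, 1 ≤ p n)
    (hpy : Filter.Tendsto (fun n => (p n : ℝ) / (n : ℝ)) Filter.atTop (nhds y)) :
    ∀ g : BoundedContinuousFunction ℝ ℝ,
      Filter.Tendsto
        (fun n => ∫ x, g x ∂(Measure.map
          (fun ω => Real.log (spearmanRho n (p n) ω).det
            + ((n : ℝ) - (p n : ℝ)) * Real.log (1 - (p n : ℝ) / (n : ℝ)) + (p n : ℝ))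
          (permVecUniform n (p n))))
        Filter.atTop
        (nhds (∫ x, g x ∂(ProbabilityTheory.gaussianReal
          ((3 / 2) * Real.log (1 - y) + 2 * y)
          (Real.toNNReal (-2 * Real.log (1 - y) - 2 * y))))) := by
  have hprob : ∀ n : ℕ, IsProbabilityMeasure (permVecUniform n (p n)) := fun n => by
    unfold permVecUniform
    infer_instance
  have hmeas : ∀ n : ℕ, Measurable (fun ω : Fin (p n) → Equiv.Perm (Fin n) =>
      Real.log (spearmanRho n (p n) ω).det
        + ((n : ℝ) - (p n : ℝ)) * Real.log (1 - (p n : ℝ) / (n : ℝ)) + (p n : ℝ)) :=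
    fun n => measurable_from_top
  have hmp : ∀ n : ℕ, IsProbabilityMeasure (Measure.map
      (fun ω : Fin (p n) → Equiv.Perm (Fin n) => Real.log (spearmanRho n (p n) ω).det
        + ((n : ℝ) - (p n : ℝ)) * Real.log (1 - (p n : ℝ) / (n : ℝ)) + (p n : ℝ))
      (permVecUniform n (p n))) := fun n =>
    have := hprob n
    Measure.isProbabilityMeasure_map (hmeas n).aemeasurable
  let μs : ℕ → ProbabilityMeasure ℝ := fun n => ⟨_, hmp n⟩
  let μ0 : ProbabilityMeasure ℝ := ⟨ProbabilityTheory.gaussianReal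
          ((3 / 2) * Real.log (1 - y) + 2 * y)
          (Real.toNNReal (-2 * Real.log (1 - y) - 2 * y)), inferInstance⟩
  have key : Filter.Tendsto μs Filter.atTop (nhds μ0) := by
    refine ProbabilityMeasure.tendsto_iff_tendsto_charFun.2 fun t => ?_
    have h := char_tendsto t y hy1 p hpy
    have e : charFun (μ0 : Measure ℝ) t = Complex.exp ((t * (1/2 * Real.log (1 - y) + y) : ℝ)
        * Complex.I - cc t * ((-2 * Real.log (1 - y) - 2 * y : ℝ) : ℂ)) := by
      change charFun (ProbabilityTheory.gaussianReal _ _) t = _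
      rw [ProbabilityTheory.charFun_gaussianReal, Real.coe_toNNReal _ (log_neg_bound y hy0 hy1), cc]
      congr 1
      push_cast
      ring
    rw [e]
    refine h.congr fun n => ?_
    change _ = charFun (Measure.map _ _) t
    rw [charFun_apply_real, integral_map (hmeas n).aemeasurable
      (by fun_prop), integral_perm]
    congr 1
    funext ω
    push_cast
    rfl
  exact ProbabilityMeasure.tendsto_iff_forall_integral_tendsto.1 key
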